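/- arXiv:1308.3181 — 2 statements merged into one kernel-verified Lean document; each statement's English description precedes it below -/
import Mathlib

section
/- (Carathéodory number 3) Let (S,d) be a Busemann surface. For any finite nonempty set Q ⊆ S, conv(Q) = ⋃ { conv({x,y,z}) : x, y, z ∈ Q }. -/
open Metric Set MeasureTheory

/-- `γ` is a geodesic on the interval `[a, b]`. -/
def IsGeodesicOn {S : Type*} [MetricSpace S] (γ : ℝ → S) (a b : ℝ) : Prop :=
  ∀ s ∈ Set.Icc a b, ∀ t ∈ Set.Icc a b, dist (γ s) (γ t) = |s - t|

/-- `γ` is a geodesic from `x` to `y`. -/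
def IsGeodesicFromTo {S : Type*} [MetricSpace S] (γ : ℝ → S) (x y : S) : Prop :=
  IsGeodesicOn γ 0 (dist x y) ∧ γ 0 = x ∧ γ (dist x y) = y

/-- A geodesic metric space: every pair of points is joined by a geodesic. -/
def IsGeodesicMetricSpace (S : Type*) [MetricSpace S] : Prop :=
  ∀ x y : S, ∃ γ : ℝ → S, IsGeodesicFromTo γ x y

/-- A Busemann space: a geodesic metric space in which the distance function between
any two geodesics is convex. -/
def IsBusemannSpace (S : Type*) [MetricSpace S] : Prop :=
  IsGeodesicMetricSpace S ∧
    ∀ (γ γ' : ℝ → S) (a b a' b' : ℝ), a ≤ b → a' ≤ b' →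
      IsGeodesicOn γ a b → IsGeodesicOn γ' a' b' →
      ConvexOn ℝ (Set.Icc (0 : ℝ) 1)
        (fun t => dist (γ ((1 - t) * a + t * b)) (γ' ((1 - t) * a' + t * b')))

/-- A Busemann surface: a Busemann space homeomorphic to the plane `ℝ²`. -/
def IsBusemannSurface (S : Type*) [MetricSpace S] : Prop :=
  IsBusemannSpace S ∧ Nonempty (S ≃ₜ (ℝ × ℝ))

/-- `G` is the image of a geodesic from `x` to `y`. -/
def IsGeodesicSegment {S : Type*} [MetricSpace S] (x y : S) (G : Set S) : Prop :=
  ∃ γ : ℝ → S, IsGeodesicFromTo γ x y ∧ G = γ '' Set.Icc 0 (dist x y)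

/-- Convexity of a set with respect to a geodesic-segment assignment `seg`. -/
def SegConvex {S : Type*} (seg : S → S → Set S) (R : Set S) : Prop :=
  ∀ p ∈ R, ∀ q ∈ R, seg p q ⊆ R

/-- The convex hull: the smallest `seg`-convex set containing `Q`. -/
def segConvexHull {S : Type*} (seg : S → S → Set S) (Q : Set S) : Set S :=
  ⋂₀ {R : Set S | SegConvex seg R ∧ Q ⊆ R}

/-- A line of `S`: the image of an isometric embedding of `ℝ` into `S`. -/
def IsLineSet {S : Type*} [MetricSpace S] (L : Set S) : Prop :=
  ∃ ℓ : ℝ → S, Isometry ℓ ∧ L = Set.range ℓ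

/-- An open halfplane determined by a line `L`: a connected component of `S \ L`. -/
def IsOpenHalfplane {S : Type*} [MetricSpace S] (L H : Set S) : Prop :=
  ∃ x, x ∉ L ∧ H = connectedComponentIn Lᶜ x

/-- A closed halfplane determined by a line `L`: an open halfplane together with `L`. -/
def IsClosedHalfplane {S : Type*} [MetricSpace S] (L H : Set S) : Prop :=
  ∃ H', IsOpenHalfplane L H' ∧ H = H' ∪ L

/-- `X` and `Y` are line-separable: they lie in different open halfplanes of some line. -/
def LineSeparable {S : Type*} [MetricSpace S] (X Y : Set S) : Prop :=
  ∃ L H₁ H₂ : Set S, IsLineSet L ∧ IsOpenHalfplane L H₁ ∧ IsOpenHalfplane L H₂ ∧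
    H₁ ≠ H₂ ∧ X ⊆ H₁ ∧ Y ⊆ H₂

/-- `X` and `Y` are weakly line-separable: they lie in different closed halfplanes of
some line. -/
def WeaklyLineSeparable {S : Type*} [MetricSpace S] (X Y : Set S) : Prop :=
  ∃ L H₁ H₂ : Set S, IsLineSet L ∧ IsClosedHalfplane L H₁ ∧ IsClosedHalfplane L H₂ ∧
    H₁ ≠ H₂ ∧ X ⊆ H₁ ∧ Y ⊆ H₂

/-- `Q` is in general position: no three distinct points of `Q` lie on a common line. -/
def InGeneralPosition {S : Type*} [MetricSpace S] (Q : Set S) : Prop :=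
  ∀ x ∈ Q, ∀ y ∈ Q, ∀ z ∈ Q, x ≠ y → y ≠ z → x ≠ z →
    ∀ L : Set S, IsLineSet L → ¬(x ∈ L ∧ y ∈ L ∧ z ∈ L)

/-- `L` is a tangent line of the set `K`. -/
def IsTangentLine {S : Type*} [MetricSpace S] (L K : Set S) : Prop :=
  IsLineSet L ∧ (K ∩ L).Nonempty ∧ ∃ H, IsClosedHalfplane L H ∧ K ⊆ H

/-- `L` is an inner bitangent of `K'` and `K''`. -/
def IsInnerBitangent {S : Type*} [MetricSpace S] (L K' K'' : Set S) : Prop :=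
  IsTangentLine L K' ∧ IsTangentLine L K'' ∧
    ∃ H₁ H₂, IsClosedHalfplane L H₁ ∧ IsClosedHalfplane L H₂ ∧ H₁ ≠ H₂ ∧
      K' ⊆ H₁ ∧ K'' ⊆ H₂

/-! A subset `K` of the surface does not wind around a point `v ∉ K` when `f - f v` has a continuous
logarithm on `K`, where `f` is a homeomorphism to `ℂ`. Contracting along geodesics shows that a
star-convex set winds around no point of its complement. On the other hand, the boundary of a
triangle `a b c` winds around every point of the triangle off the boundary, where the triangle is
the union of the segments from `a` to `[b, c]`. Indeed, if the base meets the other two sides only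
at `b` and `c` and the boundary wound around no point, the angles under which `v` sees the base and
the other two sides would agree and glue to a logarithm of `(f c - f v) / (f b - f v)` on all of
`S \ {b, c}`, which does not exist near `b`; and the points of the triangle off the boundary can be
joined there. The general case follows by cutting off the parts of the sides that overlap.

Consequently a triangle does not depend on which vertex plays the role of `a` (Peano's axiom), so
triangles are convex. Two closed sets with connected intersection, neither of which winds around
`u`, have a union that does not wind around `u`. Hence if `p` lies in the triangle `a b c`, the
segment from `d` to `p` is covered by the triangles `a b c`, `d b c` and `d a b`, because their
union contains the boundary of a triangle through that segment. It follows that the union of the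
triangles with vertices in `Q` is convex. -/

/-! ### Continuous logarithms -/

section ContinuousLog

open Complex

variable {X Y : Type*} [TopologicalSpace X] [TopologicalSpace Y] {h h₁ h₂ : X → ℂ} {K K' : Set X}

/-- The complex function `h` has a continuous logarithm on the set `K`. -/
def HasContinuousLog (h : X → ℂ) (K : Set X) : Prop :=
  ∃ g : X → ℂ, ContinuousOn g K ∧ ∀ x ∈ K, exp (g x) = h x

theorem HasContinuousLog.mono (hK' : HasContinuousLog h K') (hK : K ⊆ K') :
    HasContinuousLog h K :=
  let ⟨g, hg, hexp⟩ := hK'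
  ⟨g, hg.mono hK, fun x hx ↦ hexp x (hK hx)⟩

theorem HasContinuousLog.congr (hK : HasContinuousLog h₁ K) (heq : EqOn h₁ h₂ K) :
    HasContinuousLog h₂ K :=
  let ⟨g, hg, hexp⟩ := hK
  ⟨g, hg, fun x hx ↦ (hexp x hx).trans (heq hx)⟩

theorem HasContinuousLog.comp {φ : Y → X} {L : Set Y} (hK : HasContinuousLog h K)
    (hφ : ContinuousOn φ L) (hL : MapsTo φ L K) : HasContinuousLog (h ∘ φ) L :=
  let ⟨g, hg, hexp⟩ := hK
  ⟨g ∘ φ, hg.comp hφ hL, fun y hy ↦ hexp (φ y) (hL hy)⟩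

theorem HasContinuousLog.div (h₁K : HasContinuousLog h₁ K) (h₂K : HasContinuousLog h₂ K) :
    HasContinuousLog (fun x ↦ h₁ x / h₂ x) K :=
  let ⟨g₁, hg₁, hexp₁⟩ := h₁K
  let ⟨g₂, hg₂, hexp₂⟩ := h₂K
  ⟨g₁ - g₂, hg₁.sub hg₂, fun x hx ↦ by rw [Pi.sub_apply, exp_sub, hexp₁ x hx, hexp₂ x hx]⟩

theorem HasContinuousLog.const_mul (hK : HasContinuousLog h K) {a : ℂ} (ha : a ≠ 0) :
    HasContinuousLog (fun x ↦ a * h x) K :=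
  let ⟨g, hg, hexp⟩ := hK
  ⟨fun x ↦ log a + g x, continuousOn_const.add hg, fun x hx ↦ by
    rw [exp_add, exp_log ha, hexp x hx]⟩

theorem hasContinuousLog_of_mapsTo_slitPlane (hh : ContinuousOn h K)
    (hK : MapsTo h K slitPlane) : HasContinuousLog h K :=
  ⟨fun x ↦ log (h x), hh.clog hK, fun _ hx ↦ exp_log (slitPlane_ne_zero (hK hx))⟩

theorem hasContinuousLog_iff_exists_continuousMap :
    HasContinuousLog h K ↔ ∃ g : C(K, ℂ), ∀ x : K, exp (g x) = h x := by
  constructor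
  · rintro ⟨g, hg, hexp⟩
    exact ⟨⟨K.domRestrict g, hg.domRestrict⟩, fun x ↦ hexp x x.2⟩
  · rintro ⟨g, hexp⟩
    obtain ⟨g', hg'⟩ : ∃ g' : X → ℂ, K.domRestrict g' = g :=
      Subtype.surjective_restrict (β := fun _ ↦ ℂ) (· ∈ K) g
    refine ⟨g', continuousOn_iff_continuous_domRestrict.2 (hg' ▸ g.continuous), fun x hx ↦ ?_⟩
    rw [← hexp ⟨x, hx⟩, ← hg', domRestrict_apply]

theorem HasContinuousLog.of_homotopy {H : unitInterval → X → ℂ}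
    (hH : ContinuousOn (Function.uncurry H) (univ ×ˢ K)) (hne : ∀ t, ∀ x ∈ K, H t x ≠ 0)
    (hzero : HasContinuousLog (H 0) K) : HasContinuousLog (H 1) K := by
  rw [hasContinuousLog_iff_exists_continuousMap] at hzero ⊢
  obtain ⟨g, hg⟩ := hzero
  let homotopy : C(unitInterval × K, {z : ℂ // z ≠ 0}) :=
    ⟨fun p ↦ ⟨H p.1 p.2, hne p.1 p.2 p.2.2⟩, Continuous.subtype_mk
      (hH.comp_continuous (f := fun p : unitInterval × K ↦ (p.1, (p.2 : X))) (by fun_prop)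
        fun p ↦ ⟨mem_univ _, p.2.2⟩) _⟩
  have hstart (x : K) : homotopy (0, x) = ⟨exp (g x), exp_ne_zero _⟩ := Subtype.ext (hg x).symm
  let lift := isCoveringMap_exp.liftHomotopy homotopy g hstart
  refine ⟨lift.comp ⟨fun x ↦ (1, x), by fun_prop⟩, fun x ↦ ?_⟩
  exact congrArg Subtype.val
    (congrFun (isCoveringMap_exp.liftHomotopy_lifts homotopy g hstart) (1, x))

theorem eq_of_isPreconnected_of_exp_eq_const (hK : IsPreconnected K) {g : X → ℂ}
    (hg : ContinuousOn g K) {w : ℂ} (hexp : ∀ x ∈ K, exp (g x) = w) {x y : X} (hx : x ∈ K)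
    (hy : y ∈ K) : g x = g y :=
  isCoveringMap_exp.constOn_of_comp hK hg
    (fun x hx y hy ↦ Subtype.ext ((hexp x hx).trans (hexp y hy).symm)) hx hy

theorem HasContinuousLog.union (hK : HasContinuousLog h K) (hK' : HasContinuousLog h K')
    (hKc : IsClosed K) (hKc' : IsClosed K') (hinter : IsPreconnected (K ∩ K')) :
    HasContinuousLog h (K ∪ K') := by
  classical
  obtain ⟨g, hg, hexp⟩ := hK
  obtain ⟨g', hg', hexp'⟩ := hK'
  obtain ⟨c, hc, hgc⟩ : ∃ c : ℂ, exp c = 1 ∧ ∀ x ∈ K ∩ K', g x = g' x + c := by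
    rcases (K ∩ K').eq_empty_or_nonempty with hempty | ⟨x₀, hx₀⟩
    · exact ⟨0, exp_zero, by simp [hempty]⟩
    have hexp_sub : ∀ x ∈ K ∩ K', exp ((g - g') x) = 1 := fun x hx ↦ by
      rw [Pi.sub_apply, exp_sub, hexp x hx.1, ← hexp' x hx.2, div_self (exp_ne_zero _)]
    refine ⟨(g - g') x₀, hexp_sub x₀ hx₀, fun x hx ↦ ?_⟩
    rw [← eq_of_isPreconnected_of_exp_eq_const hinter
      ((hg.mono inter_subset_left).sub (hg'.mono inter_subset_right)) hexp_sub hx hx₀,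
      Pi.sub_apply, add_sub_cancel]
  let G : X → ℂ := K.piecewise g (g' · + c)
  have hGK : EqOn G g K := piecewise_eqOn _ _ _
  have hGK' : EqOn G (g' · + c) K' := fun x hx ↦ by
    by_cases hxK : x ∈ K
    · rw [hGK hxK, hgc x ⟨hxK, hx⟩]
    · exact piecewise_eq_of_notMem _ _ _ hxK
  refine ⟨G, (hg.congr hGK).union_of_isClosed ((hg'.add continuousOn_const).congr hGK') hKc hKc',
    fun x hx ↦ ?_⟩
  rcases hx with hx | hx
  · rw [hGK hx, hexp x hx]
  · rw [hGK' hx, exp_add, hc, mul_one, hexp' x hx]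

end ContinuousLog

section Sphere

open Complex

variable {B C : ℂ}

theorem not_hasContinuousLog_sub_sphere {r : ℝ} (hr : 0 < r) :
    ¬ HasContinuousLog (fun z ↦ z - B) (sphere B r) := by
  rintro ⟨g, hg, hexp⟩
  have hmem (θ : ℝ) : circleMap B r θ ∈ sphere B r := circleMap_mem_sphere B hr.le θ
  have hcont : Continuous fun θ : ℝ ↦ g (circleMap B r θ) - θ * I :=
    (hg.comp_continuous (continuous_circleMap B r) hmem).sub (by fun_prop)
  have hconst (θ : ℝ) : exp (g (circleMap B r θ) - θ * I) = r := by
    simp only [exp_sub, hexp _ (hmem θ), circleMap_sub_center, circleMap_zero,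
      mul_div_cancel_right₀ _ (exp_ne_zero _)]
  have hperiod := eq_of_isPreconnected_of_exp_eq_const isPreconnected_univ hcont.continuousOn
    (fun θ _ ↦ hconst θ) (mem_univ 0) (mem_univ (2 * Real.pi))
  have hreturn : circleMap B r (2 * Real.pi) = circleMap B r 0 := by
    simpa using periodic_circleMap B r 0
  rw [hreturn, sub_right_inj] at hperiod
  simp at hperiod

theorem not_hasContinuousLog_sub_div_sub (hBC : B ≠ C) :
    ¬ HasContinuousLog (fun w ↦ (C - w) / (B - w)) {B, C}ᶜ := by
  intro hlog
  have hCB : C - B ≠ 0 := sub_ne_zero.2 hBC.symm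
  have hr : 0 < ‖C - B‖ / 2 := half_pos (norm_pos_iff.2 hCB)
  have hsphere : sphere B (‖C - B‖ / 2) ⊆ {B, C}ᶜ := by
    rintro w hw (rfl | rfl)
    · exact hr.ne (by simpa using hw)
    · rw [mem_sphere, dist_eq_norm] at hw
      linarith
  have hslit : MapsTo (fun w ↦ (C - w) / (C - B)) (sphere B (‖C - B‖ / 2)) slitPlane := by
    intro w hw
    apply ball_one_subset_slitPlane
    have : (C - w) / (C - B) - 1 = -((w - B) / (C - B)) := by field_simp; ring
    rw [mem_ball, dist_eq_norm, this, norm_neg, norm_div, mem_sphere_iff_norm.1 hw]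
    rw [div_lt_one (norm_pos_iff.2 hCB)]
    exact half_lt_self (norm_pos_iff.2 hCB)
  refine not_hasContinuousLog_sub_sphere hr
    ((((hasContinuousLog_of_mapsTo_slitPlane (by fun_prop) hslit).div
      (hlog.mono hsphere)).const_mul (sub_ne_zero.2 hBC)).congr fun w hw ↦ ?_)
  have hwC : C - w ≠ 0 := sub_ne_zero.2 fun hw' ↦ hsphere hw (.inr hw'.symm)
  field_simp
  ring

end Sphere

section LogAbout

open Complex

variable {X : Type*} [TopologicalSpace X] {f : X → ℂ} {K K₁ K₂ : Set X} {a b c v w : X}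

/-- `f - f v` has a continuous logarithm on `K`: for a planar chart `f`, the set `K` does not wind
around the point `v`. -/
abbrev HasLogAbout (f : X → ℂ) (K : Set X) (v : X) : Prop :=
  HasContinuousLog (fun x ↦ f x - f v) K

theorem HasLogAbout.of_joinedIn (hv : HasLogAbout f K v) (hf : Continuous f)
    (hinj : Function.Injective f) (hvw : JoinedIn Kᶜ v w) : HasLogAbout f K w := by
  obtain ⟨γ, hγ⟩ := hvw
  have hlog := HasContinuousLog.of_homotopy (H := fun t x ↦ f x - f (γ t)) (K := K)
    (by fun_prop) (fun t x hx heq ↦ hγ t (hinj (sub_eq_zero.1 heq) ▸ hx))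
    (by simpa only [γ.source] using hv)
  simpa only [γ.target] using hlog

/-- For `v ∉ K`, the value `A v` is the increment from `b` to `c` of any continuous logarithm of
`f - f v` on `K`, that is, the complex angle under which `v` sees `K` between `b` and `c`. -/
structure IsLogIncrement (f : X → ℂ) (K : Set X) (b c : X) (A : X → ℂ) : Prop where
  continuousOn : ContinuousOn A Kᶜ
  exp_eq : ∀ v ∉ K, exp (A v) = (f c - f v) / (f b - f v)
  eq_sub : ∀ v ∉ K, ∀ g : X → ℂ, ContinuousOn g K → (∀ x ∈ K, exp (g x) = f x - f v) →
    A v = g c - g b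

theorem exists_isLogIncrement (hinj : Function.Injective f) (hK : IsPreconnected K)
    (hlog : HasContinuousLog (fun p : X × X ↦ (f p.2 - f p.1) / (f a - f p.1)) (Kᶜ ×ˢ K))
    (ha : a ∈ K) (hb : b ∈ K) (hc : c ∈ K) : ∃ A, IsLogIncrement f K b c A := by
  obtain ⟨G, hG, hexp⟩ := hlog
  have hne {v x : X} (hv : v ∉ K) (hx : x ∈ K) : f x - f v ≠ 0 :=
    sub_ne_zero.2 (hinj.ne (ne_of_mem_of_not_mem hx hv))
  have hcont {x : X} (hx : x ∈ K) : ContinuousOn (fun v ↦ G (v, x)) Kᶜ :=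
    hG.comp (by fun_prop) fun v hv ↦ ⟨hv, hx⟩
  refine ⟨fun v ↦ G (v, c) - G (v, b), (hcont hc).sub (hcont hb), fun v hv ↦ ?_,
    fun v hv g hg hgexp ↦ ?_⟩
  · rw [exp_sub, hexp (v, c) ⟨hv, hc⟩, hexp (v, b) ⟨hv, hb⟩, div_div_div_cancel_right₀ (hne hv ha)]
  · have hGv : ContinuousOn (fun x ↦ G (v, x)) K := hG.comp (by fun_prop) fun x hx ↦ ⟨hv, hx⟩
    have hdiff : ∀ x ∈ K, exp ((g - fun y ↦ G (v, y)) x) = f a - f v := fun x hx ↦ by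
      rw [Pi.sub_apply, exp_sub, hgexp x hx, hexp (v, x) ⟨hv, hx⟩, div_div_cancel₀ (hne hv hx)]
    have hconst : g c - G (v, c) = g b - G (v, b) :=
      eq_of_isPreconnected_of_exp_eq_const hK (hg.sub hGv) hdiff hc hb
    linear_combination -hconst

theorem IsLogIncrement.exists_not_hasLogAbout_union {f : X ≃ₜ ℂ} {A₁ A₂ : X → ℂ}
    (hA₁ : IsLogIncrement f K₁ b c A₁) (hA₂ : IsLogIncrement f K₂ b c A₂)
    (hK₁ : IsClosed K₁) (hK₂ : IsClosed K₂) (hinter : K₁ ∩ K₂ ⊆ {b, c}) (hbc : b ≠ c) :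
    ∃ v ∉ K₁ ∪ K₂, ¬ HasLogAbout f (K₁ ∪ K₂) v := by
  classical
  by_contra! hlog
  have hagree : ∀ v ∉ K₁ ∪ K₂, A₁ v = A₂ v := fun v hv ↦ by
    obtain ⟨g, hg, hexp⟩ := hlog v hv
    have hv' := not_or.1 hv
    rw [hA₁.eq_sub v hv'.1 g (hg.mono subset_union_left) fun x hx ↦ hexp x (.inl hx),
      hA₂.eq_sub v hv'.2 g (hg.mono subset_union_right) fun x hx ↦ hexp x (.inr hx)]
  let A : X → ℂ := K₁.piecewise A₂ A₁
  have hAA₁ : EqOn A A₁ K₁ᶜ := fun v hv ↦ piecewise_eq_of_notMem _ _ _ hv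
  have hAA₂ : EqOn A A₂ K₂ᶜ := fun v hv ↦ by
    by_cases hv₁ : v ∈ K₁
    · exact piecewise_eq_of_mem _ _ _ hv₁
    · rw [hAA₁ hv₁, hagree v (not_or.2 ⟨hv₁, hv⟩)]
  have hcover : {b, c}ᶜ ⊆ K₁ᶜ ∪ K₂ᶜ := by
    rw [← compl_inter]
    exact compl_subset_compl.2 hinter
  have hglued : HasContinuousLog (fun v ↦ (f c - f v) / (f b - f v)) {b, c}ᶜ := by
    refine ⟨A, ((hA₁.continuousOn.congr hAA₁).union_of_isOpen (hA₂.continuousOn.congr hAA₂)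
      hK₁.isOpen_compl hK₂.isOpen_compl).mono hcover, fun v hv ↦ ?_⟩
    rcases hcover hv with hv | hv
    · rw [hAA₁ hv, hA₁.exp_eq v hv]
    · rw [hAA₂ hv, hA₂.exp_eq v hv]
  refine not_hasContinuousLog_sub_div_sub (f.injective.ne hbc)
    ((hglued.comp (L := {f b, f c}ᶜ) f.symm.continuous.continuousOn fun w hw ↦ ?_).congr
      fun w _ ↦ by simp)
  simpa [f.symm_apply_eq] using hw

end LogAbout

/-! ### Segments and joins -/

theorem SegConvex.inter {S : Type*} {seg : S → S → Set S} {R R' : Set S} (hR : SegConvex seg R)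
    (hR' : SegConvex seg R') : SegConvex seg (R ∩ R') :=
  fun p hp q hq ↦ subset_inter (hR p hp.1 q hq.1) (hR' p hp.2 q hq.2)

section MetricSegment

variable {X : Type*} [PseudoMetricSpace X] {a p w x y : X} {K L : Set X}

/-- The metric segment (or interval) between `x` and `y`: the points at which the triangle
inequality is an equality. In a Busemann space it is the image of the geodesic from `x` to `y`. -/
def metricSegment (x y : X) : Set X := {w | dist x w + dist w y = dist x y}

theorem mem_metricSegment : w ∈ metricSegment x y ↔ dist x w + dist w y = dist x y := Iff.rfl

theorem metricSegment_comm (x y : X) : metricSegment x y = metricSegment y x := by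
  ext w
  rw [mem_metricSegment, mem_metricSegment, dist_comm x w, dist_comm w y, dist_comm x y, add_comm]

theorem left_mem_metricSegment (x y : X) : x ∈ metricSegment x y := by simp [mem_metricSegment]

theorem right_mem_metricSegment (x y : X) : y ∈ metricSegment x y := by simp [mem_metricSegment]

theorem dist_mem_Icc_of_mem_metricSegment (hw : w ∈ metricSegment x y) :
    dist x w ∈ Icc 0 (dist x y) :=
  ⟨dist_nonneg, by linarith [mem_metricSegment.1 hw, dist_nonneg (x := w) (y := y)]⟩

theorem metricSegment_subset_left (hp : p ∈ metricSegment x y) :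
    metricSegment x p ⊆ metricSegment x y := fun w hw ↦ by
  rw [mem_metricSegment] at *
  linarith [dist_triangle w p y, dist_triangle x w y]

theorem metricSegment_subset_right (hp : p ∈ metricSegment x y) :
    metricSegment p y ⊆ metricSegment x y := by
  rw [metricSegment_comm p, metricSegment_comm x] at *
  exact metricSegment_subset_left hp

theorem mem_metricSegment_of_mem_left (hp : p ∈ metricSegment x y) (hw : w ∈ metricSegment x p) :
    p ∈ metricSegment w y := by
  have hwy := metricSegment_subset_left hp hw
  rw [mem_metricSegment] at *
  linarith

theorem mem_metricSegment_of_mem_right (hp : p ∈ metricSegment x y) (hw : w ∈ metricSegment p y) :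
    p ∈ metricSegment x w := by
  rw [metricSegment_comm] at *
  exact mem_metricSegment_of_mem_left hp hw

/-- The join of `a` and `K`: the union of the metric segments from `a` to the points of `K`. -/
def metricJoin (a : X) (K : Set X) : Set X := {u | ∃ y ∈ K, u ∈ metricSegment a y}

theorem subset_metricJoin (a : X) (K : Set X) : K ⊆ metricJoin a K :=
  fun y hy ↦ ⟨y, hy, right_mem_metricSegment a y⟩

theorem metricJoin_mono (hKL : K ⊆ L) : metricJoin a K ⊆ metricJoin a L :=
  fun _ ⟨y, hy, hu⟩ ↦ ⟨y, hKL hy, hu⟩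

theorem metricJoin_singleton (a b : X) : metricJoin a {b} = metricSegment a b := by
  simp [metricJoin]

theorem metricJoin_pair (a b c : X) :
    metricJoin a {b, c} = metricSegment a b ∪ metricSegment a c := by
  ext u
  simp [metricJoin]

/-- `K` contains the metric segments from `a` to each of its points. -/
def MetricStarConvex (a : X) (K : Set X) : Prop := ∀ x ∈ K, metricSegment a x ⊆ K

theorem metricStarConvex_metricSegment (a b : X) : MetricStarConvex a (metricSegment a b) :=
  fun _ hx ↦ metricSegment_subset_left hx

theorem metricStarConvex_metricJoin (a : X) (K : Set X) : MetricStarConvex a (metricJoin a K) := by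
  rintro x ⟨y, hy, hxy⟩ w hw
  exact ⟨y, hy, metricSegment_subset_left hxy hw⟩

theorem MetricStarConvex.left_mem (hK : MetricStarConvex a K) (hx : x ∈ K) : a ∈ K :=
  hK x hx (left_mem_metricSegment a x)

/-- The boundary of the geodesic triangle with vertices `a`, `b`, `c`. -/
def triangleBoundary (a b c : X) : Set X :=
  metricSegment b c ∪ metricJoin a {b, c}

theorem triangleBoundary_subset_metricJoin (a b c : X) :
    triangleBoundary a b c ⊆ metricJoin a (metricSegment b c) :=
  union_subset (subset_metricJoin _ _) <| metricJoin_mono <|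
    pair_subset (left_mem_metricSegment b c) (right_mem_metricSegment b c)

theorem triangleBoundary_rotate (a b c : X) : triangleBoundary c a b = triangleBoundary a b c := by
  rw [triangleBoundary, triangleBoundary, metricJoin_pair, metricJoin_pair,
    metricSegment_comm c a, metricSegment_comm c b, ← union_assoc, union_comm]

end MetricSegment

section MetricSpace

variable {X : Type*} [MetricSpace X] {p q x : X}

theorem metricSegment_self (x : X) : metricSegment x x = {x} := by
  ext w
  rw [mem_metricSegment, dist_comm w x, dist_self, mem_singleton_iff, ← two_mul,
    mul_eq_zero_iff_left two_ne_zero, dist_eq_zero, eq_comm]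

theorem eq_of_mem_metricSegment_of_mem_metricSegment (hp : p ∈ metricSegment x q)
    (hq : q ∈ metricSegment x p) : p = q := by
  rw [mem_metricSegment, dist_comm q p] at *
  exact dist_le_zero.1 (by linarith)

end MetricSpace

/-! ### Geodesics in Busemann spaces -/

section Geodesic

variable {S : Type*} [MetricSpace S] {γ γ' : ℝ → S} {x y w : S}

theorem isGeodesicOn_of_dist_le {L : ℝ}
    (hγ : ∀ s ∈ Icc 0 L, ∀ t ∈ Icc 0 L, s ≤ t → dist (γ s) (γ t) ≤ t - s)
    (hL : L ≤ dist (γ 0) (γ L)) : IsGeodesicOn γ 0 L := by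
  have hdist : ∀ s ∈ Icc 0 L, ∀ t ∈ Icc 0 L, s ≤ t → dist (γ s) (γ t) = t - s := by
    intro s hs t ht hst
    have hL0 : 0 ≤ L := hs.1.trans hs.2
    have htriangle := dist_triangle4 (γ 0) (γ s) (γ t) (γ L)
    have hleft := hγ 0 ⟨le_rfl, hL0⟩ s hs hs.1
    have hright := hγ t ht L ⟨hL0, le_rfl⟩ ht.2
    exact (hγ s hs t ht hst).antisymm (by linarith)
  intro s hs t ht
  rcases le_total s t with hst | hts
  · rw [hdist s hs t ht hst, abs_sub_comm, abs_of_nonneg (sub_nonneg.2 hst)]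
  · rw [dist_comm, hdist t ht s hs hts, abs_of_nonneg (sub_nonneg.2 hts)]

theorem IsGeodesicFromTo.concat (hγ : IsGeodesicFromTo γ x w) (hγ' : IsGeodesicFromTo γ' w y)
    (hw : w ∈ metricSegment x y) :
    IsGeodesicFromTo (fun t ↦ if t ≤ dist x w then γ t else γ' (t - dist x w)) x y := by
  obtain ⟨hgeod, hγx, hγw⟩ := hγ
  obtain ⟨hgeod', hγw', hγy⟩ := hγ'
  rw [mem_metricSegment] at hw
  have hstart : (if 0 ≤ dist x w then γ 0 else γ' (0 - dist x w)) = x := by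
    rw [if_pos dist_nonneg, hγx]
  have hend : (if dist x y ≤ dist x w then γ (dist x y) else γ' (dist x y - dist x w)) = y := by
    split_ifs with hle
    · have hwy : w = y := dist_le_zero.1 (by linarith)
      rw [← hwy, hγw]
    · rw [← hw, add_sub_cancel_left, hγy]
  refine ⟨isGeodesicOn_of_dist_le (fun s hs t ht hst ↦ ?_) (by rw [hstart, hend]), hstart, hend⟩
  have hfirst {r : ℝ} (hr : r ∈ Icc 0 (dist x y)) (hle : r ≤ dist x w) : r ∈ Icc 0 (dist x w) :=
    ⟨hr.1, hle⟩
  have hsecond {r : ℝ} (hr : r ∈ Icc 0 (dist x y)) (hlt : ¬ r ≤ dist x w) :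
      r - dist x w ∈ Icc 0 (dist w y) := ⟨by linarith, by linarith [hr.2]⟩
  split_ifs with hs' ht' ht'
  · rw [hgeod s (hfirst hs hs') t (hfirst ht ht'), abs_sub_comm, abs_of_nonneg (by linarith)]
  · have hsw := hgeod s (hfirst hs hs') (dist x w) ⟨dist_nonneg, le_rfl⟩
    have hwt := hgeod' 0 ⟨le_rfl, dist_nonneg⟩ (t - dist x w) (hsecond ht ht')
    rw [hγw, abs_of_nonpos (by linarith)] at hsw
    rw [hγw', abs_of_nonpos (by linarith)] at hwt
    linarith [dist_triangle (γ s) w (γ' (t - dist x w))]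
  · linarith
  · rw [hgeod' _ (hsecond hs hs') _ (hsecond ht ht'), abs_of_nonpos (by linarith)]
    linarith

theorem IsBusemannSpace.eqOn_of_isGeodesicFromTo (hS : IsBusemannSpace S)
    (hγ : IsGeodesicFromTo γ x y) (hγ' : IsGeodesicFromTo γ' x y) :
    EqOn γ γ' (Icc 0 (dist x y)) := by
  intro s hs
  rcases (dist_nonneg (x := x) (y := y)).eq_or_lt with hxy | hxy
  · obtain rfl : s = 0 := le_antisymm (hs.2.trans hxy.ge) hs.1
    rw [hγ.2.1, hγ'.2.1]
  have hconvex := (hS.2 γ γ' _ _ _ _ dist_nonneg dist_nonneg hγ.1 hγ'.1).2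
    (left_mem_Icc.2 zero_le_one) (right_mem_Icc.2 zero_le_one)
    (sub_nonneg.2 (div_le_one_of_le₀ hs.2 hxy.le)) (div_nonneg hs.1 hxy.le) (sub_add_cancel 1 _)
  simpa [hγ.2.1, hγ'.2.1, hγ.2.2, hγ'.2.2, hxy.ne'] using hconvex

theorem IsBusemannSpace.apply_dist_eq_of_mem_metricSegment (hS : IsBusemannSpace S)
    (hγ : IsGeodesicFromTo γ x y) (hw : w ∈ metricSegment x y) : γ (dist x w) = w := by
  obtain ⟨γ₁, hγ₁⟩ := hS.1 x w
  obtain ⟨γ₂, hγ₂⟩ := hS.1 w y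
  calc
    γ (dist x w) = if dist x w ≤ dist x w then γ₁ (dist x w) else γ₂ (dist x w - dist x w) :=
      hS.eqOn_of_isGeodesicFromTo hγ (hγ₁.concat hγ₂ hw) (dist_mem_Icc_of_mem_metricSegment hw)
    _ = w := by rw [if_pos le_rfl, hγ₁.2.2]

theorem IsGeodesicFromTo.dist_left (hγ : IsGeodesicFromTo γ x y) {t : ℝ}
    (ht : t ∈ Icc 0 (dist x y)) : dist x (γ t) = t := by
  have hdist := hγ.1 0 (left_mem_Icc.2 dist_nonneg) t ht
  rwa [hγ.2.1, zero_sub, abs_neg, abs_of_nonneg ht.1] at hdist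

theorem IsGeodesicFromTo.dist_right (hγ : IsGeodesicFromTo γ x y) {t : ℝ}
    (ht : t ∈ Icc 0 (dist x y)) : dist (γ t) y = dist x y - t := by
  have hdist := hγ.1 t ht (dist x y) (right_mem_Icc.2 dist_nonneg)
  rwa [hγ.2.2, abs_sub_comm, abs_of_nonneg (sub_nonneg.2 ht.2)] at hdist

theorem IsBusemannSpace.metricSegment_eq_of_isGeodesicSegment (hS : IsBusemannSpace S) {G : Set S}
    (hG : IsGeodesicSegment x y G) : G = metricSegment x y := by
  obtain ⟨γ, hγ, rfl⟩ := hG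
  ext w
  constructor
  · rintro ⟨t, ht, rfl⟩
    rw [mem_metricSegment, hγ.dist_left ht, hγ.dist_right ht, add_sub_cancel]
  · intro hw
    exact ⟨dist x w, dist_mem_Icc_of_mem_metricSegment hw,
      hS.apply_dist_eq_of_mem_metricSegment hγ hw⟩

end Geodesic

namespace IsBusemannSpace

section LineMap

variable {S : Type*} [MetricSpace S] (hS : IsBusemannSpace S) {w x y : S} {K : Set S}

/-- The point dividing the geodesic from `x` to `y` in the ratio `t : 1 - t`. The geodesic is a
chosen one; in a Busemann space there is no other. -/
noncomputable def lineMap (x y : S) (t : unitInterval) : S :=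
  (hS.1 x y).choose (t * dist x y)

theorem isGeodesicFromTo_choose (x y : S) : IsGeodesicFromTo (hS.1 x y).choose x y :=
  (hS.1 x y).choose_spec

theorem mul_dist_mem_Icc (t : unitInterval) (x y : S) : (t : ℝ) * dist x y ∈ Icc 0 (dist x y) :=
  ⟨mul_nonneg t.2.1 dist_nonneg, mul_le_of_le_one_left dist_nonneg t.2.2⟩

theorem lineMap_zero (x y : S) : hS.lineMap x y 0 = x := by
  simp [lineMap, (hS.isGeodesicFromTo_choose x y).2.1]

theorem lineMap_one (x y : S) : hS.lineMap x y 1 = y := by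
  simp [lineMap, (hS.isGeodesicFromTo_choose x y).2.2]

theorem dist_lineMap_lineMap (x y : S) (s t : unitInterval) :
    dist (hS.lineMap x y s) (hS.lineMap x y t) = dist s t * dist x y := by
  rw [lineMap, lineMap, (hS.isGeodesicFromTo_choose x y).1 _ (mul_dist_mem_Icc s x y) _
    (mul_dist_mem_Icc t x y), ← sub_mul, abs_mul, abs_of_nonneg dist_nonneg, Subtype.dist_eq,
    Real.dist_eq]

theorem dist_left_lineMap (x y : S) (t : unitInterval) :
    dist x (hS.lineMap x y t) = t * dist x y :=
  (hS.isGeodesicFromTo_choose x y).dist_left (mul_dist_mem_Icc t x y)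

theorem dist_lineMap_right (x y : S) (t : unitInterval) :
    dist (hS.lineMap x y t) y = (1 - t) * dist x y := by
  rw [one_sub_mul]
  exact (hS.isGeodesicFromTo_choose x y).dist_right (mul_dist_mem_Icc t x y)

theorem lineMap_mem_metricSegment (x y : S) (t : unitInterval) :
    hS.lineMap x y t ∈ metricSegment x y := by
  rw [mem_metricSegment, dist_left_lineMap, dist_lineMap_right, ← add_mul, add_sub_cancel, one_mul]

theorem lineMap_eq_of_dist_eq (hw : w ∈ metricSegment x y) {t : unitInterval}
    (ht : dist x w = t * dist x y) : hS.lineMap x y t = w := by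
  rw [lineMap, ← ht, hS.apply_dist_eq_of_mem_metricSegment (hS.isGeodesicFromTo_choose x y) hw]

theorem exists_lineMap_eq (hw : w ∈ metricSegment x y) : ∃ t, hS.lineMap x y t = w := by
  have hle : dist x w ≤ dist x y := (dist_mem_Icc_of_mem_metricSegment hw).2
  refine ⟨⟨dist x w / dist x y, div_nonneg dist_nonneg dist_nonneg,
    div_le_one_of_le₀ hle dist_nonneg⟩, hS.lineMap_eq_of_dist_eq hw ?_⟩
  exact (div_mul_cancel_of_imp fun hxy ↦ le_antisymm (hle.trans hxy.le) dist_nonneg).symm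

theorem dist_lineMap_lineMap_le (x y y' : S) (t : unitInterval) :
    dist (hS.lineMap x y t) (hS.lineMap x y' t) ≤ t * dist y y' := by
  have hγ := hS.isGeodesicFromTo_choose x y
  have hγ' := hS.isGeodesicFromTo_choose x y'
  have hconvex := (hS.2 _ _ _ _ _ _ dist_nonneg dist_nonneg hγ.1 hγ'.1).2
    (left_mem_Icc.2 zero_le_one) (right_mem_Icc.2 zero_le_one) (sub_nonneg.2 t.2.2) t.2.1
    (sub_add_cancel 1 _)
  simpa [lineMap, hγ.2.1, hγ'.2.1, hγ.2.2, hγ'.2.2] using hconvex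

theorem continuous_lineMap (x : S) : Continuous fun p : S × unitInterval ↦ hS.lineMap x p.1 p.2 :=
  continuous_prod_of_continuous_lipschitzWith _ 1
    (fun y ↦ (LipschitzWith.of_dist_le_mul (K := nndist x y) fun s t ↦ by
      rw [dist_lineMap_lineMap, mul_comm, coe_nndist]).continuous)
    fun t ↦ .of_dist_le_mul fun y y' ↦ (hS.dist_lineMap_lineMap_le x y y' t).trans
      (mul_le_mul_of_nonneg_right t.2.2 dist_nonneg)

theorem metricJoin_eq_image (x : S) (K : Set S) :
    metricJoin x K = (fun p : S × unitInterval ↦ hS.lineMap x p.1 p.2) '' (K ×ˢ univ) := by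
  ext w
  constructor
  · rintro ⟨y, hy, hw⟩
    obtain ⟨t, rfl⟩ := hS.exists_lineMap_eq hw
    exact ⟨(y, t), ⟨hy, mem_univ t⟩, rfl⟩
  · rintro ⟨⟨y, t⟩, ⟨hy, -⟩, rfl⟩
    exact ⟨y, hy, hS.lineMap_mem_metricSegment x y t⟩

theorem isCompact_metricJoin (hS : IsBusemannSpace S) (x : S) (hK : IsCompact K) :
    IsCompact (metricJoin x K) := by
  rw [hS.metricJoin_eq_image]
  exact (hK.prod isCompact_univ).image (hS.continuous_lineMap x)

theorem isCompact_metricSegment (hS : IsBusemannSpace S) (x y : S) :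
    IsCompact (metricSegment x y) :=
  metricJoin_singleton x y ▸ hS.isCompact_metricJoin x isCompact_singleton

theorem joinedIn_of_metricSegment_subset (hS : IsBusemannSpace S)
    (hK : metricSegment x y ⊆ K) : JoinedIn K x y :=
  ⟨⟨⟨hS.lineMap x y, (hS.continuous_lineMap x).comp (Continuous.prodMk_right y)⟩,
    hS.lineMap_zero x y, hS.lineMap_one x y⟩, fun t ↦ hK (hS.lineMap_mem_metricSegment x y t)⟩

theorem isPreconnected_of_metricStarConvex (hS : IsBusemannSpace S) (hK : MetricStarConvex x K) :
    IsPreconnected K := by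
  rcases K.eq_empty_or_nonempty with rfl | ⟨y, hy⟩
  · exact isPreconnected_empty
  · have hpath : IsPathConnected K := ⟨x, hK.left_mem hy, fun w hw ↦
      hS.joinedIn_of_metricSegment_subset (hK w hw)⟩
    exact hpath.isConnected.isPreconnected

theorem isPreconnected_of_segConvex (hS : IsBusemannSpace S) (hK : SegConvex metricSegment K) :
    IsPreconnected K := by
  rcases K.eq_empty_or_nonempty with rfl | ⟨y, hy⟩
  · exact isPreconnected_empty
  · exact hS.isPreconnected_of_metricStarConvex (hK y hy)

end LineMap

section Order

variable {S : Type*} [MetricSpace S] {p p' q q' r x y z : S}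

theorem mem_metricSegment_of_dist_le (hS : IsBusemannSpace S) (hp : p ∈ metricSegment x y)
    (hq : q ∈ metricSegment x y) (hpq : dist x p ≤ dist x q) : p ∈ metricSegment x q := by
  obtain ⟨γ, hγ⟩ := hS.1 x y
  have hdist : dist (γ (dist x p)) (γ (dist x q)) = |dist x p - dist x q| :=
    hγ.1 _ (dist_mem_Icc_of_mem_metricSegment hp) _ (dist_mem_Icc_of_mem_metricSegment hq)
  rw [hS.apply_dist_eq_of_mem_metricSegment hγ hp, hS.apply_dist_eq_of_mem_metricSegment hγ hq,
    abs_of_nonpos (sub_nonpos.2 hpq)] at hdist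
  rw [mem_metricSegment, hdist]
  ring

theorem mem_metricSegment_or_mem_metricSegment (hS : IsBusemannSpace S)
    (hp : p ∈ metricSegment x y) (hq : q ∈ metricSegment x y) :
    p ∈ metricSegment x q ∨ q ∈ metricSegment x p :=
  (le_total (dist x p) (dist x q)).imp (hS.mem_metricSegment_of_dist_le hp hq)
    (hS.mem_metricSegment_of_dist_le hq hp)

theorem segConvex_metricSegment (hS : IsBusemannSpace S) (x y : S) :
    SegConvex metricSegment (metricSegment x y) := by
  intro p hp q hq
  rcases hS.mem_metricSegment_or_mem_metricSegment hp hq with hpq | hqp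
  · exact (metricSegment_subset_right hpq).trans (metricSegment_subset_left hq)
  · rw [metricSegment_comm]
    exact (metricSegment_subset_right hqp).trans (metricSegment_subset_left hp)

theorem dist_mul_dist_le_of_dist_mul_dist_eq (hS : IsBusemannSpace S)
    (hp : p ∈ metricSegment z q) (hp' : p' ∈ metricSegment z q')
    (hratio : dist z p * dist z q' = dist z p' * dist z q) :
    dist z q * dist p p' ≤ dist z p * dist q q' := by
  rcases (dist_nonneg (x := z) (y := q)).eq_or_lt with hzq | hzq
  · rw [← hzq, zero_mul]
    positivity
  let t : unitInterval := ⟨dist z p / dist z q, by positivity,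
    div_le_one_of_le₀ (dist_mem_Icc_of_mem_metricSegment hp).2 hzq.le⟩
  have ht : dist z p = t * dist z q := (div_mul_cancel₀ _ hzq.ne').symm
  have ht' : dist z p' = t * dist z q' := by
    rw [div_mul_eq_mul_div, hratio, mul_div_cancel_right₀ _ hzq.ne']
  rw [← hS.lineMap_eq_of_dist_eq hp ht, ← hS.lineMap_eq_of_dist_eq hp' ht', dist_left_lineMap,
    mul_right_comm, mul_comm]
  exact mul_le_mul_of_nonneg_right (hS.dist_lineMap_lineMap_le z q q' t) hzq.le

theorem eq_of_dist_mul_dist_eq (hS : IsBusemannSpace S) (hp : p ∈ metricSegment z q)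
    (hq : q ∈ metricSegment p r) (hp' : p' ∈ metricSegment z q') (hq' : q' ∈ metricSegment p' r)
    (hpq : p ≠ q) (hz : dist z p * dist z q' = dist z p' * dist z q)
    (hr : dist r q * dist r p' = dist r q' * dist r p) : p = p' := by
  have hle : dist z q * dist p p' ≤ dist z p * dist q q' :=
    hS.dist_mul_dist_le_of_dist_mul_dist_eq hp hp' hz
  have hle' : dist r p * dist q q' ≤ dist r q * dist p p' :=
    hS.dist_mul_dist_le_of_dist_mul_dist_eq (metricSegment_comm p r ▸ hq)
      (metricSegment_comm p' r ▸ hq') hr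
  have hpos : 0 < dist z q * dist r p - dist z p * dist r q := by
    rw [dist_comm r p, dist_comm r q, ← mem_metricSegment.1 hp, ← mem_metricSegment.1 hq]
    have hB : 0 < dist p q := dist_pos.2 hpq
    have hA : 0 ≤ dist z p := dist_nonneg
    have hC : 0 ≤ dist q r := dist_nonneg
    nlinarith [mul_pos hB hB, mul_nonneg hA hB.le, mul_nonneg hB.le hC]
  have hcontract : (dist z q * dist r p - dist z p * dist r q) * dist p p' ≤ 0 := by
    linarith [mul_le_mul_of_nonneg_left hle (dist_nonneg (x := r) (y := p)),
      mul_le_mul_of_nonneg_left hle' (dist_nonneg (x := z) (y := p))]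
  exact dist_le_zero.1 (nonpos_of_mul_nonpos_right hcontract hpos)

/-- Local geodesics are geodesics. Writing `A`, `B`, `C` for the distances along `z, p, q, r`, the
points `p`, `q` are compared with the points dividing `[z, r]` in the ratios `A : B + C` and
`A + B : C`. -/
theorem mem_metricSegment_of_overlap (hS : IsBusemannSpace S) (hp : p ∈ metricSegment z q)
    (hq : q ∈ metricSegment p r) (hpq : p ≠ q) : p ∈ metricSegment z r := by
  have hzq := mem_metricSegment.1 hp
  have hpr := mem_metricSegment.1 hq
  have hB : 0 < dist p q := dist_pos.2 hpq
  set A := dist z p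
  set B := dist p q
  set C := dist q r
  have hA : 0 ≤ A := dist_nonneg
  have hC : 0 ≤ C := dist_nonneg
  have hL : 0 < A + B + C := by positivity
  let s : unitInterval := ⟨A / (A + B + C), by positivity, (div_le_one hL).2 (by linarith)⟩
  let t : unitInterval := ⟨(A + B) / (A + B + C), by positivity, (div_le_one hL).2 (by linarith)⟩
  have hs : hS.lineMap z r s ∈ metricSegment z r := hS.lineMap_mem_metricSegment z r s
  have ht : hS.lineMap z r t ∈ metricSegment z r := hS.lineMap_mem_metricSegment z r t
  have hst : hS.lineMap z r s ∈ metricSegment z (hS.lineMap z r t) :=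
    hS.mem_metricSegment_of_dist_le hs ht <| by
      rw [dist_left_lineMap, dist_left_lineMap]
      exact mul_le_mul_of_nonneg_right (div_le_div_of_nonneg_right (by linarith) hL.le) dist_nonneg
  suffices hps : p = hS.lineMap z r s from hps ▸ hs
  apply hS.eq_of_dist_mul_dist_eq hp hq hst (mem_metricSegment_of_mem_left ht hst) hpq
  · rw [dist_left_lineMap, dist_left_lineMap, ← hzq]
    ring
  · rw [dist_comm r, dist_comm r, dist_comm r, dist_comm r, dist_lineMap_right,
      dist_lineMap_right, ← hpr]
    simp only [s, t]
    field_simp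
    ring

end Order

end IsBusemannSpace

/-! ### Winding of triangle boundaries -/

namespace IsBusemannSpace

section StarConvex

variable {S : Type*} [MetricSpace S] {f : S → ℂ} {K : Set S} {a b c v : S}

theorem hasContinuousLog_sub_div_sub (hS : IsBusemannSpace S) (hf : Continuous f)
    (hinj : Function.Injective f) (hK : MetricStarConvex a K) :
    HasContinuousLog (fun p : S × S ↦ (f p.2 - f p.1) / (f a - f p.1)) (Kᶜ ×ˢ K) := by
  have hne {v x : S} (hv : v ∈ Kᶜ) (hx : x ∈ K) : f x - f v ≠ 0 :=
    sub_ne_zero.2 (hinj.ne (ne_of_mem_of_not_mem hx hv))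
  have hmem {x : S} (hx : x ∈ K) (t : unitInterval) : hS.lineMap a x t ∈ K :=
    hK x hx (hS.lineMap_mem_metricSegment a x t)
  have hlog := HasContinuousLog.of_homotopy (K := Kᶜ ×ˢ K)
    (H := fun t p ↦ (f (hS.lineMap a p.2 t) - f p.1) / (f a - f p.1)) ?_
    (fun t p hp ↦ div_ne_zero (hne hp.1 (hmem hp.2 t)) (hne hp.1 (hK.left_mem hp.2))) ?_
  · simpa only [lineMap_one] using hlog
  · have hline : Continuous fun q : unitInterval × S × S ↦ hS.lineMap a q.2.2 q.1 :=
      (hS.continuous_lineMap a).comp (f := fun q : unitInterval × S × S ↦ (q.2.2, q.1))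
        (by fun_prop)
    exact ContinuousOn.div (by fun_prop) (by fun_prop) fun q hq ↦ hne hq.2.1 (hK.left_mem hq.2.2)
  · refine ⟨0, continuousOn_const, fun p hp ↦ ?_⟩
    simp only [lineMap_zero, div_self (hne hp.1 (hK.left_mem hp.2)), Pi.zero_apply,
      Complex.exp_zero]

theorem hasLogAbout_of_metricStarConvex (hS : IsBusemannSpace S) (hf : Continuous f)
    (hinj : Function.Injective f) (hK : MetricStarConvex a K) (hv : v ∉ K) :
    HasLogAbout f K v := by
  rcases K.eq_empty_or_nonempty with rfl | ⟨x, hx⟩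
  · exact ⟨0, continuousOn_empty 0, fun x hx ↦ hx.elim⟩
  have hav : f a - f v ≠ 0 := sub_ne_zero.2 (hinj.ne (ne_of_mem_of_not_mem (hK.left_mem hx) hv))
  have hlog : HasContinuousLog (fun x ↦ (f x - f v) / (f a - f v)) K :=
    (hS.hasContinuousLog_sub_div_sub hf hinj hK).comp (φ := fun x ↦ (v, x)) (by fun_prop)
      fun x hx ↦ ⟨hv, hx⟩
  exact (hlog.const_mul hav).congr fun x _ ↦ mul_div_cancel₀ _ hav

theorem exists_isLogIncrement_of_metricStarConvex (hS : IsBusemannSpace S) (hf : Continuous f)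
    (hinj : Function.Injective f) (hK : MetricStarConvex a K) (hb : b ∈ K) (hc : c ∈ K) :
    ∃ A, IsLogIncrement f K b c A :=
  exists_isLogIncrement hinj (hS.isPreconnected_of_metricStarConvex hK)
    (hS.hasContinuousLog_sub_div_sub hf hinj hK) (hK.left_mem hb) hb hc

theorem hasLogAbout_metricJoin (hS : IsBusemannSpace S) (hf : Continuous f)
    (hinj : Function.Injective f) (hv : v ∉ metricJoin a K) : HasLogAbout f (metricJoin a K) v :=
  hS.hasLogAbout_of_metricStarConvex hf hinj (metricStarConvex_metricJoin a K) hv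

end StarConvex

end IsBusemannSpace

/-- The base `[b, c]` of the triangle `a b c` is nondegenerate and meets each of the sides `[a, b]`
and `[a, c]` only at their common vertex; the sides `[a, b]` and `[a, c]` may share an initial
segment. -/
structure HasDetachedBase {S : Type*} [MetricSpace S] (a b c : S) : Prop where
  ne : b ≠ c
  eq_left : ∀ x ∈ metricSegment b c, x ∈ metricSegment a b → x = b
  eq_right : ∀ x ∈ metricSegment b c, x ∈ metricSegment a c → x = c

namespace HasDetachedBase

variable {S : Type*} [MetricSpace S] {a b c v w x y z : S}

theorem symm (h : HasDetachedBase a b c) : HasDetachedBase a c b where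
  ne := h.ne.symm
  eq_left := metricSegment_comm b c ▸ h.eq_right
  eq_right := metricSegment_comm b c ▸ h.eq_left

theorem metricSegment_inter_metricJoin_subset (h : HasDetachedBase a b c) :
    metricSegment b c ∩ metricJoin a {b, c} ⊆ {b, c} := by
  rw [metricJoin_pair]
  rintro x ⟨hx, hxb | hxc⟩
  · exact .inl (h.eq_left x hx hxb)
  · exact .inr (h.eq_right x hx hxc)

theorem exists_not_hasLogAbout (h : HasDetachedBase a b c) (hS : IsBusemannSpace S) (f : S ≃ₜ ℂ) :
    ∃ v ∉ triangleBoundary a b c, ¬ HasLogAbout f (triangleBoundary a b c) v := by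
  obtain ⟨A₁, hA₁⟩ := hS.exists_isLogIncrement_of_metricStarConvex f.continuous f.injective
    (metricStarConvex_metricSegment b c) (left_mem_metricSegment b c) (right_mem_metricSegment b c)
  obtain ⟨A₂, hA₂⟩ := hS.exists_isLogIncrement_of_metricStarConvex f.continuous f.injective
    (metricStarConvex_metricJoin a {b, c}) (subset_metricJoin a _ (mem_insert b _))
    (subset_metricJoin a _ (mem_insert_of_mem b rfl))
  exact hA₁.exists_not_hasLogAbout_union hA₂ (hS.isCompact_metricSegment b c).isClosed
    (hS.isCompact_metricJoin a (toFinite _).isCompact).isClosed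
    h.metricSegment_inter_metricJoin_subset h.ne

theorem eq_of_mem_base_of_mem_base (h : HasDetachedBase a b c) (hS : IsBusemannSpace S)
    (hx : x ∈ metricSegment b c) (hw : w ∈ metricSegment b c) (hwx : w ∈ metricSegment a x) :
    w = x := by
  by_contra hne
  rcases hS.mem_metricSegment_or_mem_metricSegment hw hx with hbwx | hbxw
  · have hxc : x ∈ metricSegment w c := mem_metricSegment_of_mem_left hx hbwx
    obtain rfl := h.eq_right w hw (hS.mem_metricSegment_of_overlap hwx hxc hne)
    rw [metricSegment_self] at hxc
    exact hne hxc.symm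
  · rw [metricSegment_comm] at hbxw
    obtain rfl := h.eq_left w hw (hS.mem_metricSegment_of_overlap hwx hbxw hne)
    rw [metricSegment_self] at hbxw
    exact hne hbxw.symm

theorem metricSegment_subset_compl_of_mem (h : HasDetachedBase a b c) (hS : IsBusemannSpace S)
    (hx : x ∈ metricSegment b c) (hw : w ∈ metricSegment a x) (hvw : v ∈ metricSegment a w)
    (hvB : v ∉ triangleBoundary a b c) (hwB : w ∉ triangleBoundary a b c) :
    metricSegment v w ⊆ (triangleBoundary a b c)ᶜ := by
  intro p hp hpB
  have hpw : p ∈ metricSegment a w := metricSegment_subset_right hvw hp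
  rcases hpB with hpbase | hplegs
  · obtain rfl := h.eq_of_mem_base_of_mem_base hS hx hpbase (metricSegment_subset_left hw hpw)
    obtain rfl := eq_of_mem_metricSegment_of_mem_metricSegment hpw hw
    exact hwB (.inl hpbase)
  · exact hvB (.inr (metricStarConvex_metricJoin a _ p hplegs
      (mem_metricSegment_of_mem_right hvw hp)))

theorem joinedIn_compl_of_mem (h : HasDetachedBase a b c) (hS : IsBusemannSpace S)
    (hx : x ∈ metricSegment b c) (hv : v ∈ metricSegment a x) (hw : w ∈ metricSegment a x)
    (hvB : v ∉ triangleBoundary a b c) (hwB : w ∉ triangleBoundary a b c) :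
    JoinedIn (triangleBoundary a b c)ᶜ v w := by
  rcases hS.mem_metricSegment_or_mem_metricSegment hv hw with hvw | hwv
  · exact hS.joinedIn_of_metricSegment_subset
      (h.metricSegment_subset_compl_of_mem hS hx hw hvw hvB hwB)
  · exact (hS.joinedIn_of_metricSegment_subset
      (h.metricSegment_subset_compl_of_mem hS hx hv hwv hwB hvB)).symm

theorem eq_left_of_mem_metricSegment (h : HasDetachedBase a b c) (hS : IsBusemannSpace S)
    (hy : y ∈ metricSegment b c) (hz : z ∈ metricSegment b c) (hx : x ∈ metricSegment y z)
    (hxb : x ∈ metricSegment a b) : y = b ∨ z = b := by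
  obtain rfl := h.eq_left x (hS.segConvex_metricSegment b c y hy z hz hx) hxb
  rcases hS.mem_metricSegment_or_mem_metricSegment hy hz with hyz | hzy
  · rw [metricSegment_comm] at hx hyz
    exact .inl (eq_of_mem_metricSegment_of_mem_metricSegment hyz hx)
  · rw [metricSegment_comm] at hzy
    exact .inr (eq_of_mem_metricSegment_of_mem_metricSegment hzy hx)

theorem disjoint_metricSegment_metricJoin (h : HasDetachedBase a b c) (hS : IsBusemannSpace S)
    (hy : y ∈ metricSegment b c) (hz : z ∈ metricSegment b c) (hya : y ∉ metricJoin a {b, c})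
    (hza : z ∉ metricJoin a {b, c}) : Disjoint (metricSegment y z) (metricJoin a {b, c}) := by
  have hb : b ∈ metricJoin a {b, c} := subset_metricJoin a _ (mem_insert b _)
  have hc : c ∈ metricJoin a {b, c} := subset_metricJoin a _ (mem_insert_of_mem b rfl)
  refine disjoint_left.2 fun x hx hxa ↦ ?_
  rw [metricJoin_pair] at hxa
  rcases hxa with hxb | hxc
  · rcases h.eq_left_of_mem_metricSegment hS hy hz hx hxb with rfl | rfl
    exacts [hya hb, hza hb]
  · rw [metricSegment_comm] at hy hz
    rcases h.symm.eq_left_of_mem_metricSegment hS hy hz hx hxc with rfl | rfl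
    exacts [hya hc, hza hc]

theorem exists_lineMap_notMem_triangleBoundary (h : HasDetachedBase a b c)
    (hS : IsBusemannSpace S) {K : Set S} (hK : IsCompact K) (hKbase : K ⊆ metricSegment b c)
    (hKlegs : Disjoint K (metricJoin a {b, c})) :
    ∃ t : unitInterval, ∀ x ∈ K, hS.lineMap a x t ∉ triangleBoundary a b c := by
  have hopen : IsOpen (metricJoin a {b, c})ᶜ :=
    (hS.isCompact_metricJoin a (toFinite _).isCompact).isClosed.isOpen_compl
  have hlegs : ∀ᶠ t in nhds (1 : unitInterval),
      ∀ x ∈ K, hS.lineMap a x t ∈ (metricJoin a {b, c})ᶜ :=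
    hK.eventually_forall_of_forall_eventually fun x hx ↦ by
      have hx1 : hS.lineMap a x 1 ∈ (metricJoin a {b, c})ᶜ := by
        rw [hS.lineMap_one]
        exact hKlegs.notMem_of_mem_left hx
      exact ((hS.continuous_lineMap a).comp continuous_swap).continuousAt.eventually_mem
        (hopen.mem_nhds hx1)
  obtain ⟨t, ht, ht1⟩ := ((hlegs.filter_mono nhdsWithin_le_nhds).and
    (self_mem_nhdsWithin (s := {(1 : unitInterval)}ᶜ))).exists
  refine ⟨t, fun x hx hxB ↦ hxB.elim (fun hbase ↦ ?_) (ht x hx)⟩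
  have hfix : hS.lineMap a x t = x :=
    h.eq_of_mem_base_of_mem_base hS (hKbase hx) hbase (hS.lineMap_mem_metricSegment a x t)
  have hax : a = x := by
    have hdist := hS.dist_lineMap_right a x t
    rw [hfix, dist_self, zero_eq_mul, sub_eq_zero] at hdist
    exact dist_eq_zero.1 (hdist.resolve_left fun ht ↦ ht1 (Subtype.ext ht.symm))
  exact ht x hx ⟨b, mem_insert b _, hfix.symm ▸ hax ▸ left_mem_metricSegment a b⟩

/-- Slide both points along their rays from `a` to a common level close to the base, and connect
them there by the image of a piece of the base. -/
theorem joinedIn_compl_triangleBoundary (h : HasDetachedBase a b c) (hS : IsBusemannSpace S)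
    (hv : v ∈ metricJoin a (metricSegment b c)) (hw : w ∈ metricJoin a (metricSegment b c))
    (hvB : v ∉ triangleBoundary a b c) (hwB : w ∉ triangleBoundary a b c) :
    JoinedIn (triangleBoundary a b c)ᶜ v w := by
  obtain ⟨y, hy, hvy⟩ := hv
  obtain ⟨z, hz, hwz⟩ := hw
  have hya : y ∉ metricJoin a {b, c} := fun hya ↦
    hvB (.inr (metricStarConvex_metricJoin a _ y hya hvy))
  have hza : z ∉ metricJoin a {b, c} := fun hza ↦
    hwB (.inr (metricStarConvex_metricJoin a _ z hza hwz))
  obtain ⟨t, ht⟩ := h.exists_lineMap_notMem_triangleBoundary hS (hS.isCompact_metricSegment y z)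
    (hS.segConvex_metricSegment b c y hy z hz)
    (h.disjoint_metricSegment_metricJoin hS hy hz hya hza)
  have hlevel : JoinedIn (triangleBoundary a b c)ᶜ (hS.lineMap a y t) (hS.lineMap a z t) :=
    ((hS.joinedIn_of_metricSegment_subset Subset.rfl).map
      ((hS.continuous_lineMap a).comp (Continuous.prodMk_left t))).mono (image_subset_iff.2 ht)
  have hyt := h.joinedIn_compl_of_mem hS hy hvy (hS.lineMap_mem_metricSegment a y t) hvB
    (ht y (left_mem_metricSegment y z))
  have hzt := h.joinedIn_compl_of_mem hS hz (hS.lineMap_mem_metricSegment a z t) hwz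
    (ht z (right_mem_metricSegment y z)) hwB
  exact (hyt.trans hlevel).trans hzt

theorem not_hasLogAbout (h : HasDetachedBase a b c) (hS : IsBusemannSpace S) (f : S ≃ₜ ℂ)
    (hv : v ∈ metricJoin a (metricSegment b c)) (hvB : v ∉ triangleBoundary a b c) :
    ¬ HasLogAbout f (triangleBoundary a b c) v := by
  intro hlog
  obtain ⟨w, hwB, hw⟩ := h.exists_not_hasLogAbout hS f
  have hwT : w ∈ metricJoin a (metricSegment b c) := by
    by_contra hwT
    exact hw ((hS.hasLogAbout_metricJoin f.continuous f.injective hwT).mono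
      (triangleBoundary_subset_metricJoin a b c))
  exact hw (hlog.of_joinedIn f.continuous f.injective
    (h.joinedIn_compl_triangleBoundary hS hv hwT hvB hwB))

end HasDetachedBase

namespace IsBusemannSpace

section Triangle

variable {S : Type*} [MetricSpace S] {a b c d p u v y : S}

theorem exists_last_mem_metricSegment (hS : IsBusemannSpace S) (hy : y ∈ metricSegment b c)
    (hyb : y ∉ metricSegment a b) :
    ∃ b' ∈ metricSegment b y, b' ∈ metricSegment a b ∧
      ∀ c' ∈ metricSegment y c, ∀ x ∈ metricSegment b' c', x ∈ metricSegment a b → x = b' := by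
  obtain ⟨b', ⟨hb'y, hab'⟩, hmax⟩ :=
    ((hS.isCompact_metricSegment b y).inter (hS.isCompact_metricSegment a b)).exists_isMaxOn
      ⟨b, left_mem_metricSegment b y, right_mem_metricSegment a b⟩
      (f := fun x ↦ dist b x) (by fun_prop)
  refine ⟨b', hb'y, hab', fun c' hc' x hx hxa ↦ ?_⟩
  have hy' : y ∈ metricSegment b' c' :=
    mem_metricSegment_of_mem_right (mem_metricSegment_of_mem_left hy hb'y) hc'
  rcases hS.mem_metricSegment_or_mem_metricSegment hx hy' with hxy | hyx
  · have hdist := mem_metricSegment.1 (mem_metricSegment_of_mem_right hb'y hxy)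
    have hle : dist b x ≤ dist b b' := hmax ⟨metricSegment_subset_right hb'y hxy, hxa⟩
    exact (dist_le_zero.1 (by linarith)).symm
  · exact absurd (hS.segConvex_metricSegment a b b' hab' x hxa hyx) hyb

theorem exists_hasDetachedBase (hS : IsBusemannSpace S) (hy : y ∈ metricSegment b c)
    (hya : y ∉ metricJoin a {b, c}) :
    ∃ b' c', HasDetachedBase a b' c' ∧ y ∈ metricSegment b' c' ∧
      triangleBoundary a b' c' ⊆ triangleBoundary a b c := by
  obtain ⟨hyb, hyc⟩ : y ∉ metricSegment a b ∧ y ∉ metricSegment a c := by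
    rwa [metricJoin_pair, mem_union, not_or] at hya
  obtain ⟨b', hb'y, hab', hb'⟩ := hS.exists_last_mem_metricSegment hy hyb
  obtain ⟨c', hc'y, hac', hc'⟩ :=
    hS.exists_last_mem_metricSegment (metricSegment_comm b c ▸ hy) hyc
  rw [metricSegment_comm] at hc'y
  have hy' : y ∈ metricSegment b' c' :=
    mem_metricSegment_of_mem_right (mem_metricSegment_of_mem_left hy hb'y) hc'y
  have hleft := metricSegment_subset_left hab'
  have hright := metricSegment_subset_left hac'
  have hbase : metricSegment b' c' ⊆ metricSegment b c := hS.segConvex_metricSegment b c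
    b' (metricSegment_subset_left hy hb'y) c' (metricSegment_subset_right hy hc'y)
  refine ⟨b', c', ⟨?_, fun x hx hxb ↦ hb' c' hc'y x hx (hleft hxb), fun x hx hxc ↦ ?_⟩, hy', ?_⟩
  · rintro rfl
    rw [metricSegment_self] at hy'
    exact hyb (hy' ▸ hab')
  · exact hc' b' (metricSegment_comm b y ▸ hb'y) x (metricSegment_comm b' c' ▸ hx) (hright hxc)
  · rw [triangleBoundary, triangleBoundary, metricJoin_pair, metricJoin_pair]
    exact union_subset_union hbase (union_subset_union hleft hright)

theorem not_hasLogAbout_triangleBoundary (hS : IsBusemannSpace S) (f : S ≃ₜ ℂ)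
    (hv : v ∈ metricJoin a (metricSegment b c)) (hvB : v ∉ triangleBoundary a b c) :
    ¬ HasLogAbout f (triangleBoundary a b c) v := by
  obtain ⟨y, hy, hvy⟩ := hv
  have hya : y ∉ metricJoin a {b, c} := fun hya ↦
    hvB (.inr (metricStarConvex_metricJoin a _ y hya hvy))
  obtain ⟨b', c', hdetached, hy', hsub⟩ := hS.exists_hasDetachedBase hy hya
  exact fun hlog ↦ hdetached.not_hasLogAbout hS f ⟨y, hy', hvy⟩ (fun hv ↦ hvB (hsub hv))
    (hlog.mono hsub)

theorem metricJoin_metricSegment_rotate_subset (hS : IsBusemannSpace S) (f : S ≃ₜ ℂ) (a b c : S) :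
    metricJoin c (metricSegment a b) ⊆ metricJoin a (metricSegment b c) := by
  intro u hu
  by_contra hu'
  have huB : u ∉ triangleBoundary a b c := fun h ↦ hu' (triangleBoundary_subset_metricJoin a b c h)
  rw [← triangleBoundary_rotate] at huB
  refine hS.not_hasLogAbout_triangleBoundary f hu huB ?_
  rw [triangleBoundary_rotate]
  exact (hS.hasLogAbout_metricJoin f.continuous f.injective hu').mono
    (triangleBoundary_subset_metricJoin a b c)

theorem segConvex_metricJoin (hS : IsBusemannSpace S) (f : S ≃ₜ ℂ) (q : S) {C : Set S}
    (hC : SegConvex metricSegment C) : SegConvex metricSegment (metricJoin q C) := by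
  rintro x ⟨p, hp, hx⟩ x' ⟨p', hp', hx'⟩ u hu
  rw [metricSegment_comm] at hu
  obtain ⟨w, hw, huw⟩ := hS.metricJoin_metricSegment_rotate_subset f q p x' ⟨x, hx, hu⟩
  obtain ⟨y, hy, hwy⟩ := hS.metricJoin_metricSegment_rotate_subset f q p' p ⟨x', hx', hw⟩
  exact ⟨y, hC p' hp' p hp hy, metricSegment_subset_left hwy huw⟩

theorem isClosed_metricJoin_metricSegment (hS : IsBusemannSpace S) (a b c : S) :
    IsClosed (metricJoin a (metricSegment b c)) :=
  (hS.isCompact_metricJoin a (hS.isCompact_metricSegment b c)).isClosed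

theorem isPreconnected_metricJoin_inter_metricJoin (hS : IsBusemannSpace S) (f : S ≃ₜ ℂ)
    (a d : S) {C C' : Set S} (hC : SegConvex metricSegment C) (hC' : SegConvex metricSegment C') :
    IsPreconnected (metricJoin a C ∩ metricJoin d C') :=
  hS.isPreconnected_of_segConvex
    ((hS.segConvex_metricJoin f a hC).inter (hS.segConvex_metricJoin f d hC'))

theorem hasLogAbout_union_metricJoin (hS : IsBusemannSpace S) (f : S ≃ₜ ℂ)
    (habc : u ∉ metricJoin a (metricSegment b c)) (hdbc : u ∉ metricJoin d (metricSegment b c))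
    (hdab : u ∉ metricJoin d (metricSegment a b)) :
    HasLogAbout f (metricJoin a (metricSegment b c) ∪ metricJoin d (metricSegment b c) ∪
      metricJoin d (metricSegment a b)) u := by
  have hlog {x y z : S} (hu : u ∉ metricJoin x (metricSegment y z)) :
      HasLogAbout f (metricJoin x (metricSegment y z)) u :=
    hS.hasLogAbout_metricJoin f.continuous f.injective hu
  have hconn (x y z x' y' z' : S) : IsPreconnected
      (metricJoin x (metricSegment y z) ∩ metricJoin x' (metricSegment y' z')) :=
    hS.isPreconnected_metricJoin_inter_metricJoin f x x' (hS.segConvex_metricSegment y z)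
      (hS.segConvex_metricSegment y' z')
  have hclosed := hS.isClosed_metricJoin_metricSegment
  refine ((hlog habc).union (hlog hdbc) (hclosed a b c) (hclosed d b c)
    (hconn a b c d b c)).union (hlog hdab) ((hclosed a b c).union (hclosed d b c))
    (hclosed d a b) ?_
  have hb (x : S) : b ∈ metricJoin x (metricSegment b c) :=
    subset_metricJoin x _ (left_mem_metricSegment b c)
  have hb' : b ∈ metricJoin d (metricSegment a b) :=
    subset_metricJoin d _ (right_mem_metricSegment a b)
  rw [union_inter_distrib_right]
  exact .union b ⟨hb a, hb'⟩ ⟨hb d, hb'⟩ (hconn a b c d a b) (hconn d b c d a b)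

theorem mem_metricJoin_of_mem_metricSegment (hS : IsBusemannSpace S) (f : S ≃ₜ ℂ)
    (hp : p ∈ metricJoin a (metricSegment b c)) (hu : u ∈ metricSegment d p) :
    u ∈ metricJoin a (metricSegment b c) ∨ u ∈ metricJoin d (metricSegment b c) ∨
      u ∈ metricJoin d (metricSegment a b) := by
  by_contra! hcon
  obtain ⟨habc, hdbc, hdab⟩ := hcon
  obtain ⟨y, hy, hpy⟩ := hp
  have hsub : triangleBoundary d a y ⊆ metricJoin a (metricSegment b c) ∪
      metricJoin d (metricSegment b c) ∪ metricJoin d (metricSegment a b) := by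
    rw [triangleBoundary, metricJoin_pair]
    rintro x (hx | hx | hx)
    · exact .inl (.inl ⟨y, hy, hx⟩)
    · exact .inr ⟨a, left_mem_metricSegment a b, hx⟩
    · exact .inl (.inr ⟨y, hy, hx⟩)
  refine hS.not_hasLogAbout_triangleBoundary f ⟨p, hpy, hu⟩ (fun huB ↦ ?_)
    ((hS.hasLogAbout_union_metricJoin f habc hdbc hdab).mono hsub)
  rcases hsub huB with (h | h) | h
  exacts [habc h, hdbc h, hdab h]

end Triangle

end IsBusemannSpace

/-! ### Convexity of the union of triangles -/

section ConvexHull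

variable {S : Type*} {seg : S → S → Set S} {Q R : Set S}

theorem segConvexHull_subset (hR : SegConvex seg R) (hQ : Q ⊆ R) : segConvexHull seg Q ⊆ R :=
  sInter_subset_of_mem ⟨hR, hQ⟩

theorem subset_segConvexHull (seg : S → S → Set S) (Q : Set S) : Q ⊆ segConvexHull seg Q :=
  subset_sInter fun _ hR ↦ hR.2

theorem segConvex_segConvexHull (seg : S → S → Set S) (Q : Set S) :
    SegConvex seg (segConvexHull seg Q) :=
  fun p hp q hq ↦ subset_sInter fun R hR ↦ hR.1 p (hp R hR) q (hq R hR)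

theorem segConvexHull_mono (hQR : Q ⊆ R) : segConvexHull seg Q ⊆ segConvexHull seg R :=
  segConvexHull_subset (segConvex_segConvexHull seg R) (hQR.trans (subset_segConvexHull seg R))

theorem metricJoin_metricSegment_subset_segConvexHull {X : Type*} [PseudoMetricSpace X]
    (x y z : X) :
    metricJoin x (metricSegment y z) ⊆ segConvexHull metricSegment {x, y, z} := by
  have hconvex := segConvex_segConvexHull metricSegment {x, y, z}
  have hmem := subset_segConvexHull metricSegment {x, y, z}
  rintro u ⟨w, hw, hu⟩
  exact hconvex x (hmem (by simp)) w (hconvex y (hmem (by simp)) z (hmem (by simp)) hw) hu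

end ConvexHull

section MetricTriangles

/-- The union of all triangles with vertices in `Q`, each triangle `x y z` being filled by the
segments from `x` to the points of `[y, z]`. -/
def metricTriangles {X : Type*} [PseudoMetricSpace X] (Q : Set X) : Set X :=
  {u | ∃ x ∈ Q, ∃ y ∈ Q, ∃ z ∈ Q, u ∈ metricJoin x (metricSegment y z)}

theorem subset_metricTriangles {X : Type*} [PseudoMetricSpace X] (Q : Set X) :
    Q ⊆ metricTriangles Q :=
  fun x hx ↦ ⟨x, hx, x, hx, x, hx, subset_metricJoin x _ (left_mem_metricSegment x x)⟩

variable {S : Type*} [MetricSpace S] {Q : Set S} {b c d p u w y z : S}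

namespace IsBusemannSpace

theorem mem_metricTriangles_or_exists_of_mem_metricSegment (hS : IsBusemannSpace S) (f : S ≃ₜ ℂ)
    (hp : p ∈ metricTriangles Q) (hu : u ∈ metricSegment d p) :
    u ∈ metricTriangles Q ∨ ∃ y ∈ Q, ∃ z ∈ Q, u ∈ metricJoin d (metricSegment y z) := by
  obtain ⟨a, ha, b, hb, c, hc, hp⟩ := hp
  rcases hS.mem_metricJoin_of_mem_metricSegment f hp hu with habc | hdbc | hdab
  · exact .inl ⟨a, ha, b, hb, c, hc, habc⟩
  · exact .inr ⟨b, hb, c, hc, hdbc⟩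
  · exact .inr ⟨a, ha, b, hb, hdab⟩

theorem metricJoin_metricSegment_subset_metricTriangles (hS : IsBusemannSpace S) (f : S ≃ₜ ℂ)
    (hb : b ∈ Q) (hc : c ∈ Q) (hy : y ∈ Q) (hz : z ∈ Q) (hw : w ∈ metricSegment b c) :
    metricJoin w (metricSegment y z) ⊆ metricTriangles Q := by
  intro u hu
  obtain ⟨r, hr, hur⟩ := hS.metricJoin_metricSegment_rotate_subset f y z w hu
  have hrQ : r ∈ metricTriangles Q := ⟨z, hz, b, hb, c, hc, w, hw, hr⟩
  rcases hS.mem_metricTriangles_or_exists_of_mem_metricSegment f hrQ hur with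
    huQ | ⟨b', hb', c', hc', hu'⟩
  · exact huQ
  · exact ⟨y, hy, b', hb', c', hc', hu'⟩

theorem segConvex_metricTriangles (hS : IsBusemannSpace S) (f : S ≃ₜ ℂ) (Q : Set S) :
    SegConvex metricSegment (metricTriangles Q) := by
  intro q hq p hp u hu
  rcases hS.mem_metricTriangles_or_exists_of_mem_metricSegment f hp hu with
    huQ | ⟨b, hb, c, hc, w, hw, huw⟩
  · exact huQ
  rw [metricSegment_comm] at huw
  rcases hS.mem_metricTriangles_or_exists_of_mem_metricSegment f hq huw with
    huQ | ⟨y, hy, z, hz, hu⟩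
  · exact huQ
  · exact hS.metricJoin_metricSegment_subset_metricTriangles f hb hc hy hz hw hu

end IsBusemannSpace

end MetricTriangles

theorem busemann_surface_caratheodory_general {S : Type*} [MetricSpace S]
    (hS : IsBusemannSurface S)
    (seg : S → S → Set S) (hseg : ∀ x y : S, IsGeodesicSegment x y (seg x y)) (Q : Set S) :
    segConvexHull seg Q =
      ⋃ x ∈ Q, ⋃ y ∈ Q, ⋃ z ∈ Q, segConvexHull seg {x, y, z} := by
  obtain ⟨hS, ⟨e⟩⟩ := hS
  let f : S ≃ₜ ℂ := e.trans Complex.equivRealProdCLM.symm.toHomeomorph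
  obtain rfl : seg = metricSegment :=
    funext₂ fun x y ↦ hS.metricSegment_eq_of_isGeodesicSegment (hseg x y)
  apply Subset.antisymm
  · intro u hu
    obtain ⟨x, hx, y, hy, z, hz, hu⟩ :=
      segConvexHull_subset (hS.segConvex_metricTriangles f Q) (subset_metricTriangles Q) hu
    simp only [mem_iUnion]
    exact ⟨x, hx, y, hy, z, hz, metricJoin_metricSegment_subset_segConvexHull x y z hu⟩
  · exact iUnion₂_subset fun x hx ↦ iUnion₂_subset fun y hy ↦ iUnion₂_subset fun z hz ↦
      segConvexHull_mono (insert_subset hx (pair_subset hy hz))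

/-- Carathéodory number 3: for a finite nonempty `Q`,
`conv(Q) = ⋃ {conv({x,y,z}) : x,y,z ∈ Q}`. -/
theorem busemann_surface_caratheodory {S : Type*} [MetricSpace S]
    (hS : IsBusemannSurface S)
    (seg : S → S → Set S) (hseg : ∀ x y : S, IsGeodesicSegment x y (seg x y))
    (Q : Set S) (hQfin : Q.Finite) (hQne : Q.Nonempty) :
    segConvexHull seg Q =
      ⋃ x ∈ Q, ⋃ y ∈ Q, ⋃ z ∈ Q, segConvexHull seg {x, y, z} :=
  busemann_surface_caratheodory_general hS seg hseg Q
end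

section
/- (Consequence of the Crofton formula) Let (S,d) be a Busemann surface and let Q = {p₁,…,pₙ} ⊆ S be a finite set of points in general position. Then the finite metric space (Q,d) is l1-embeddable: there exist N and a map φ : Q → ℝᴺ such that Σᵢ |φ(x)ᵢ − φ(y)ᵢ| = d(x,y) for all x, y ∈ Q. -/
open Metric Set MeasureTheory

/-!
A finite metric space embeds in `ℓ¹` if and only if its metric is a nonnegative combination of cut
pseudometrics. Let first no point of the configuration lie on the geodesic between two others.

The angles of a geodesic triangle, measured in a chart, sum up to an odd multiple of `π`, and this
gives every noncollinear triple an orientation. The orientations satisfy Knuth's axioms of a CC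
system, so that one can speak of the oriented lines through two points that separate the two classes
of a cut: its bitangents. The weight of a cut is the total length of the bitangents that join the
two classes minus the total length of the bitangents with both ends in one class. The latter form
two convex chains, one for each class. The two joining bitangents cross, and each chain is at most
as long as the detour through the crossing point, whence the weight is nonnegative.

Moving one end of a pair `i j` to the other class reverses the sign with which `i j` contributes to
the weight of a cut. So among all pairs only `x y` and `y x` survive when the weights of the cuts
separating `x` from `y` are added up. This is the Crofton formula: the distance of `x` and `y` is,
up to a factor, the total weight of the cuts that separate them.

The remaining configurations are limits of such ones, and the cone of cut pseudometrics is closed.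
-/

/-! ### Metric betweenness -/

section MetricBtw

variable {S : Type*} [MetricSpace S] {c w x y z m : S}

/-- `m` lies metrically between `x` and `y`: the triangle inequality through `m` is an equality.
In a Busemann space this says that `m` is a point of the geodesic segment from `x` to `y`. -/
def MetricBtw (x m y : S) : Prop :=
  dist x m + dist m y = dist x y

theorem metricBtw_left (x y : S) : MetricBtw x x y := by simp [MetricBtw]

theorem metricBtw_right (x y : S) : MetricBtw x y y := by simp [MetricBtw]

theorem isClosed_setOf_metricBtw (x y : S) : IsClosed {m | MetricBtw x m y} :=
  isClosed_eq (by fun_prop) continuous_const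

namespace MetricBtw

theorem symm (h : MetricBtw x m y) : MetricBtw y m x := by
  rw [MetricBtw] at h ⊢
  linarith [dist_comm y m, dist_comm m x, dist_comm y x]

theorem eq_of_self (h : MetricBtw x m x) : m = x := by
  rw [MetricBtw, dist_self, dist_comm m x] at h
  exact (dist_eq_zero.1 (by linarith)).symm

theorem trans_left (h₁ : MetricBtw w y z) (h₂ : MetricBtw w x y) : MetricBtw w x z := by
  rw [MetricBtw] at *
  linarith [dist_triangle w x z, dist_triangle x y z]

theorem trans_left_right (h₁ : MetricBtw w y z) (h₂ : MetricBtw w x y) : MetricBtw x y z := by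
  rw [MetricBtw] at *
  linarith [dist_triangle w x z, dist_triangle x y z]

theorem trans_right (h₁ : MetricBtw w x z) (h₂ : MetricBtw x y z) : MetricBtw w y z :=
  (h₁.symm.trans_left h₂.symm).symm

theorem trans_right_left (h₁ : MetricBtw w x z) (h₂ : MetricBtw x y z) : MetricBtw w x y :=
  (h₁.symm.trans_left_right h₂.symm).symm

theorem eq_of_legs (hx : MetricBtw c m x) (hy : MetricBtw c m y) (h : MetricBtw x c y) :
    m = c := by
  rw [MetricBtw] at *
  refine (dist_le_zero.1 ?_).symm
  linarith [dist_triangle x m y, dist_comm x m, dist_comm x c]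

end MetricBtw

/-- Three points none of which lies between the other two. -/
def Noncollinear (a b c : S) : Prop :=
  ¬ MetricBtw a b c ∧ ¬ MetricBtw b c a ∧ ¬ MetricBtw c a b

namespace Noncollinear

variable {a b c : S}

theorem rotate (h : Noncollinear a b c) : Noncollinear b c a := ⟨h.2.1, h.2.2, h.1⟩

theorem swap_left (h : Noncollinear a b c) : Noncollinear b a c :=
  ⟨fun k => h.2.2 k.symm, fun k => h.2.1 k.symm, fun k => h.1 k.symm⟩

theorem swap_right (h : Noncollinear a b c) : Noncollinear a c b := h.rotate.swap_left.rotate.rotate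

theorem ne₁₂ (h : Noncollinear a b c) : a ≠ b := by
  rintro rfl
  exact h.1 (metricBtw_left _ _)

theorem ne₂₃ (h : Noncollinear a b c) : b ≠ c := h.rotate.ne₁₂

theorem ne₃₁ (h : Noncollinear a b c) : c ≠ a := h.rotate.rotate.ne₁₂

end Noncollinear

end MetricBtw

/-! ### Geodesics in Busemann spaces -/

namespace IsGeodesicFromTo

variable {S : Type*} [MetricSpace S] {γ γ₁ γ₂ : ℝ → S} {x y m : S} {s : ℝ}

theorem dist_left_s16 (h : IsGeodesicFromTo γ x y) (hs : s ∈ Icc 0 (dist x y)) :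
    dist x (γ s) = s := by
  have := h.1 0 ⟨le_rfl, dist_nonneg⟩ s hs
  rwa [h.2.1, zero_sub, abs_neg, abs_of_nonneg hs.1] at this

theorem dist_right_s16 (h : IsGeodesicFromTo γ x y) (hs : s ∈ Icc 0 (dist x y)) :
    dist (γ s) y = dist x y - s := by
  have := h.1 s hs _ ⟨dist_nonneg, le_rfl⟩
  rwa [h.2.2, abs_sub_comm, abs_of_nonneg (by linarith [hs.2])] at this

theorem metricBtw (h : IsGeodesicFromTo γ x y) (hs : s ∈ Icc 0 (dist x y)) :
    MetricBtw x (γ s) y := by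
  rw [MetricBtw, h.dist_left_s16 hs, h.dist_right_s16 hs, add_sub_cancel]

theorem dist_concat {s t : ℝ} (h₁ : IsGeodesicFromTo γ₁ x m) (h₂ : IsGeodesicFromTo γ₂ m y)
    (hm : MetricBtw x m y) (hs : s ∈ Icc 0 (dist x m)) (ht : t ∈ Icc 0 (dist m y)) :
    dist (γ₁ s) (γ₂ t) = dist x m - s + t := by
  have key : MetricBtw (γ₁ s) m (γ₂ t) :=
    (hm.trans_left_right (h₁.metricBtw hs)).trans_right_left (h₂.metricBtw ht)
  rw [← key, h₁.dist_right_s16 hs, h₂.dist_left_s16 ht]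

theorem concat_s16 (h₁ : IsGeodesicFromTo γ₁ x m) (h₂ : IsGeodesicFromTo γ₂ m y)
    (hm : MetricBtw x m y) :
    IsGeodesicFromTo (fun u => if u ≤ dist x m then γ₁ u else γ₂ (u - dist x m)) x y := by
  have hsum : dist x m + dist m y = dist x y := hm
  refine ⟨fun s hs t ht => ?_, ?_, ?_⟩
  · dsimp only
    split_ifs with hsm htm htm
    · exact h₁.1 s ⟨hs.1, hsm⟩ t ⟨ht.1, htm⟩
    · rw [h₁.dist_concat h₂ hm ⟨hs.1, hsm⟩ ⟨by linarith, by linarith [ht.2]⟩, abs_sub_comm,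
        abs_of_nonneg (by linarith)]
      ring
    · rw [dist_comm, h₁.dist_concat h₂ hm ⟨ht.1, htm⟩ ⟨by linarith, by linarith [hs.2]⟩,
        abs_of_nonneg (by linarith)]
      ring
    · rw [h₂.1 _ ⟨by linarith, by linarith [hs.2]⟩ _ ⟨by linarith, by linarith [ht.2]⟩,
        sub_sub_sub_cancel_right]
  · simpa only [dist_nonneg, if_true] using h₁.2.1
  · dsimp only
    split_ifs with hle
    · obtain rfl : m = y := dist_le_zero.1 (by linarith)
      exact h₁.2.2
    · rw [show dist x y - dist x m = dist m y by linarith]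
      exact h₂.2.2

end IsGeodesicFromTo

/-- `IsBusemannSpace` as a typeclass. -/
class BusemannSpace (S : Type*) [MetricSpace S] : Prop where
  isBusemannSpace : IsBusemannSpace S

section BusemannSpace

variable {S : Type*} [MetricSpace S] [BusemannSpace S] {x y x' y' m a b c e f : S} {s t : ℝ}

open BusemannSpace in
/-- The geodesic from `x` to `y`, parametrized proportionally to arc length on `[0, 1]` and
extended to `ℝ` by constants. -/
noncomputable def geodesicMap (x y : S) (s : ℝ) : S :=
  (isBusemannSpace (S := S).1 x y).choose (projIcc 0 1 zero_le_one s * dist x y)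

open BusemannSpace in
theorem exists_geodesicMap_eq (x y : S) :
    ∃ γ, IsGeodesicFromTo γ x y ∧
      ∀ s, geodesicMap x y s = γ (projIcc 0 1 zero_le_one s * dist x y) :=
  ⟨_, (isBusemannSpace (S := S).1 x y).choose_spec, fun _ => rfl⟩

theorem geodesicMap_projIcc (x y : S) (s : ℝ) :
    geodesicMap x y (projIcc (0 : ℝ) 1 zero_le_one s) = geodesicMap x y s := by
  rw [geodesicMap, projIcc_val, ← geodesicMap]

@[simp]
theorem geodesicMap_zero (x y : S) : geodesicMap x y 0 = x := by
  obtain ⟨γ, hγ, h⟩ := exists_geodesicMap_eq x y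
  simpa [h] using hγ.2.1

@[simp]
theorem geodesicMap_one (x y : S) : geodesicMap x y 1 = y := by
  obtain ⟨γ, hγ, h⟩ := exists_geodesicMap_eq x y
  simpa [h] using hγ.2.2

theorem dist_geodesicMap (x y : S) (hs : s ∈ Icc (0 : ℝ) 1) (ht : t ∈ Icc (0 : ℝ) 1) :
    dist (geodesicMap x y s) (geodesicMap x y t) = |s - t| * dist x y := by
  obtain ⟨γ, hγ, h⟩ := exists_geodesicMap_eq x y
  have hmem : ∀ r ∈ Icc (0 : ℝ) 1, r * dist x y ∈ Icc 0 (dist x y) := fun r hr =>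
    ⟨mul_nonneg hr.1 dist_nonneg, mul_le_of_le_one_left dist_nonneg hr.2⟩
  rw [h, h, projIcc_of_mem _ hs, projIcc_of_mem _ ht, hγ.1 _ (hmem s hs) _ (hmem t ht), ← sub_mul,
    abs_mul, abs_of_nonneg dist_nonneg]

theorem dist_left_geodesicMap (x y : S) (hs : s ∈ Icc (0 : ℝ) 1) :
    dist x (geodesicMap x y s) = s * dist x y := by
  simpa [abs_of_nonneg hs.1] using dist_geodesicMap x y (s := 0) (by simp) hs

theorem dist_geodesicMap_right (x y : S) (hs : s ∈ Icc (0 : ℝ) 1) :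
    dist (geodesicMap x y s) y = (1 - s) * dist x y := by
  simpa [abs_sub_comm s, abs_of_nonneg (sub_nonneg.2 hs.2)] using
    dist_geodesicMap x y (t := 1) hs (by simp)

theorem IsGeodesicFromTo.dist_le {γ γ' : ℝ → S} (h : IsGeodesicFromTo γ x y)
    (h' : IsGeodesicFromTo γ' x' y') (hs : s ∈ Icc (0 : ℝ) 1) :
    dist (γ (s * dist x y)) (γ' (s * dist x' y')) ≤ (1 - s) * dist x x' + s * dist y y' := by
  obtain ⟨-, hconv⟩ := (BusemannSpace.isBusemannSpace (S := S)).2 γ γ' 0 _ 0 _ dist_nonneg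
    dist_nonneg h.1 h'.1
  simpa [h.2.1, h.2.2, h'.2.1, h'.2.2] using
    hconv (x := 0) (by simp) (y := 1) (by simp) (sub_nonneg.2 hs.2) hs.1 (sub_add_cancel 1 s)

theorem dist_geodesicMap_geodesicMap_le (x y x' y' : S) (hs : s ∈ Icc (0 : ℝ) 1) :
    dist (geodesicMap x y s) (geodesicMap x' y' s) ≤ (1 - s) * dist x x' + s * dist y y' := by
  obtain ⟨γ, hγ, h⟩ := exists_geodesicMap_eq x y
  obtain ⟨γ', hγ', h'⟩ := exists_geodesicMap_eq x' y'
  rw [h, h', projIcc_of_mem _ hs]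
  exact hγ.dist_le hγ' hs

/-- Follow a geodesic to `m` and then one from `m`: the result is a geodesic, so by convexity it
cannot differ from the chosen one. -/
theorem eq_geodesicMap (hs : s ∈ Icc (0 : ℝ) 1) (hx : dist x m = s * dist x y)
    (hy : dist m y = (1 - s) * dist x y) : m = geodesicMap x y s := by
  obtain ⟨γ₁, hγ₁, -⟩ := exists_geodesicMap_eq x m
  obtain ⟨γ₂, hγ₂, -⟩ := exists_geodesicMap_eq m y
  obtain ⟨γ, hγ, h⟩ := exists_geodesicMap_eq x y
  have hm : MetricBtw x m y := by rw [MetricBtw, hx, hy]; ring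
  have key := (hγ₁.concat_s16 hγ₂ hm).dist_le hγ hs
  simp only [← hx, le_refl, if_true, hγ₁.2.2, dist_self, mul_zero, add_zero] at key
  rw [h, projIcc_of_mem _ hs, ← hx]
  exact dist_le_zero.1 key

theorem metricBtw_geodesicMap (x y : S) (s : ℝ) : MetricBtw x (geodesicMap x y s) y := by
  have hs := (projIcc (0 : ℝ) 1 zero_le_one s).2
  rw [← geodesicMap_projIcc, MetricBtw, dist_left_geodesicMap _ _ hs, dist_geodesicMap_right _ _ hs]
  ring

@[simp]
theorem geodesicMap_self (x : S) (s : ℝ) : geodesicMap x x s = x :=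
  (metricBtw_geodesicMap x x s).eq_of_self

theorem MetricBtw.exists_eq_geodesicMap (h : MetricBtw x m y) :
    ∃ s ∈ Icc (0 : ℝ) 1, m = geodesicMap x y s := by
  rcases eq_or_ne x y with rfl | hxy
  · exact ⟨0, by simp, by simp [h.eq_of_self]⟩
  · have hpos : 0 < dist x y := dist_pos.2 hxy
    rw [MetricBtw] at h
    have hs : dist x m / dist x y ∈ Icc (0 : ℝ) 1 :=
      ⟨by positivity, by rw [div_le_one hpos]; linarith [dist_nonneg (x := m) (y := y)]⟩
    exact ⟨_, hs, eq_geodesicMap hs (by field_simp) (by field_simp; linarith)⟩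

theorem geodesicMap_swap (x y : S) (s : ℝ) : geodesicMap y x s = geodesicMap x y (1 - s) := by
  rw [← geodesicMap_projIcc y x, ← geodesicMap_projIcc x y, ← unitInterval.symm_projIcc,
    unitInterval.coe_symm_eq]
  have hs := (projIcc (0 : ℝ) 1 zero_le_one s).2
  apply eq_geodesicMap ⟨sub_nonneg.2 hs.2, sub_le_self _ hs.1⟩
  · rw [dist_comm, dist_geodesicMap_right _ _ hs, dist_comm y x]
  · rw [dist_comm, dist_left_geodesicMap _ _ hs, dist_comm y x, sub_sub_cancel]

theorem metricBtw_geodesicMap_geodesicMap (x y : S) (hs : s ∈ Icc (0 : ℝ) 1)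
    (ht : t ∈ Icc (0 : ℝ) 1) (hst : s ≤ t) :
    MetricBtw x (geodesicMap x y s) (geodesicMap x y t) := by
  rw [MetricBtw, dist_left_geodesicMap _ _ hs, dist_left_geodesicMap _ _ ht,
    dist_geodesicMap _ _ hs ht, abs_sub_comm, abs_of_nonneg (sub_nonneg.2 hst)]
  ring

theorem dist_geodesicMap_le (x y x' y' : S) (s t : ℝ) :
    dist (geodesicMap x y s) (geodesicMap x' y' t) ≤
      dist x x' + dist y y' + |s - t| * dist x' y' := by
  rw [← geodesicMap_projIcc x y s, ← geodesicMap_projIcc x' y' t]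
  obtain ⟨hp0, hp1⟩ := (projIcc (0 : ℝ) 1 zero_le_one s).2
  have hconv := dist_geodesicMap_geodesicMap_le x y x' y' ⟨hp0, hp1⟩
  have hpar := dist_geodesicMap x' y' ⟨hp0, hp1⟩ (projIcc (0 : ℝ) 1 zero_le_one t).2
  have hproj := mul_le_mul_of_nonneg_right
    (abs_projIcc_sub_projIcc (c := s) (d := t) (zero_le_one (α := ℝ)))
    (dist_nonneg (x := x') (y := y'))
  have hx := mul_nonneg hp0 (dist_nonneg (x := x) (y := x'))
  have hy := mul_nonneg (sub_nonneg.2 hp1) (dist_nonneg (x := y) (y := y'))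
  calc
    _ ≤ _ + _ := dist_triangle _ (geodesicMap x' y' (projIcc (0 : ℝ) 1 zero_le_one s)) _
    _ ≤ _ := by linarith

theorem continuous_uncurry_geodesicMap :
    Continuous fun p : S × S × ℝ => geodesicMap p.1 p.2.1 p.2.2 := by
  refine continuous_iff_continuousAt.2 fun ⟨x', y', t⟩ => tendsto_iff_dist_tendsto_zero.2 ?_
  refine squeeze_zero (fun _ => dist_nonneg)
    (fun p => dist_geodesicMap_le p.1 p.2.1 x' y' p.2.2 t) ?_
  have hcont : Continuous fun p : S × S × ℝ =>
      dist p.1 x' + dist p.2.1 y' + |p.2.2 - t| * dist x' y' := by fun_prop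
  simpa using hcont.tendsto (x', y', t)

@[fun_prop]
theorem continuous_geodesicMap {X : Type*} [TopologicalSpace X] {f g : X → S} {k : X → ℝ}
    (hf : Continuous f) (hg : Continuous g) (hk : Continuous k) :
    Continuous fun u => geodesicMap (f u) (g u) (k u) :=
  continuous_uncurry_geodesicMap.comp (hf.prodMk (hg.prodMk hk))

namespace MetricBtw

theorem total (h₁ : MetricBtw a b e) (h₂ : MetricBtw a c e) :
    MetricBtw a b c ∨ MetricBtw a c b := by
  obtain ⟨s, hs, rfl⟩ := h₁.exists_eq_geodesicMap
  obtain ⟨t, ht, rfl⟩ := h₂.exists_eq_geodesicMap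
  exact (le_total s t).imp (metricBtw_geodesicMap_geodesicMap _ _ hs ht)
    (metricBtw_geodesicMap_geodesicMap _ _ ht hs)

theorem of_btw_btw (h₁ : MetricBtw a b e) (h₂ : MetricBtw a c e) (hf : MetricBtw b f c) :
    MetricBtw a f e := by
  rcases h₁.total h₂ with h | h
  · exact h₂.trans_left (h.trans_right hf)
  · exact h₁.trans_left (h.trans_right hf.symm)

/-- Local geodesics are geodesics: compare the two geodesics issuing from `a` at the parameter
`s` at which the one towards `b` passes through `e`. -/
theorem trans_expand_right (h₁ : MetricBtw b e a) (h₂ : MetricBtw e a c) (hea : e ≠ a) :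
    MetricBtw b a c := by
  obtain ⟨s, hs, rfl⟩ := h₁.symm.exists_eq_geodesicMap
  have hs0 : s ≠ 0 := by rintro rfl; simp at hea
  have hspos : 0 < s := lt_of_le_of_ne hs.1 hs0.symm
  have hsc : MetricBtw (geodesicMap a b s) a (geodesicMap a c s) :=
    h₂.trans_right_left (metricBtw_geodesicMap a c s)
  have hconv := dist_geodesicMap_geodesicMap_le a b a c hs
  rw [← hsc, dist_comm _ a, dist_left_geodesicMap _ _ hs, dist_left_geodesicMap _ _ hs, dist_self,
    mul_zero, zero_add, ← mul_add, dist_comm a b] at hconv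
  exact le_antisymm (le_of_mul_le_mul_left hconv hspos) (dist_triangle b a c)

end MetricBtw

section Noncollinear

variable {O b' k l w z a₁ a₂ b₁ b₂ : S}

theorem Noncollinear.extend (h : Noncollinear a b c) (hb : MetricBtw a b b') :
    Noncollinear a b' c := by
  refine ⟨fun k => h.1 (k.trans_left hb), fun k => ?_, fun k => h.2.2 (k.trans_right_left hb)⟩
  rcases hb.total k.symm with hbc | hcb
  · exact h.1 hbc
  · exact h.2.1 hcb.symm

theorem Noncollinear.not_metricBtw_of_metricBtw (h : Noncollinear a₁ b₁ a₂)
    (hz : MetricBtw a₂ z b₂) (hz₁ : MetricBtw a₁ b₁ z) (hw : MetricBtw a₁ w b₁) :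
    ¬ MetricBtw b₂ a₂ w := by
  intro hw₂
  have hzw : MetricBtw z a₂ w := hw₂.trans_left_right hz.symm
  have ha : MetricBtw a₁ a₂ z := (hz₁.trans_left hw).trans_right hzw.symm
  rcases hz₁.total ha with hba | hab
  · exact h.1 hba
  · exact h.2.1 hab.symm

theorem Noncollinear.shrink (h : Noncollinear a b c) (hz : MetricBtw a z b) (hza : z ≠ a)
    (hzc : ¬ MetricBtw a z c) : Noncollinear a z c :=
  ⟨hzc, fun k => h.2.1 (hz.trans_left k.symm).symm,
    fun k => h.swap_left.1 (hz.symm.trans_expand_right k.symm hza)⟩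

theorem noncollinear_of_dist_lt (hk : dist O x < dist O k) (hl : dist O x < dist O l)
    (h : MetricBtw k O l) (nk : ¬ MetricBtw O x k) (nl : ¬ MetricBtw O x l) :
    Noncollinear k l x := by
  refine ⟨fun hlx => ?_, fun hlxk => ?_, fun hxk => ?_⟩
  · have : MetricBtw O l x := hlx.trans_left_right h
    rw [MetricBtw] at this
    linarith [dist_nonneg (x := l) (y := x)]
  · rcases hlxk.total h.symm with hlxO | hlOx
    · exact nl hlxO.symm
    · exact nk (hlxk.trans_left_right hlOx)
  · have : MetricBtw O k x := hxk.symm.trans_left_right h.symm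
    rw [MetricBtw] at this
    linarith [dist_nonneg (x := k) (y := x)]

theorem exists_mem_leg_ball (h : O ≠ a) {δ : ℝ} (hδ : 0 < δ) :
    ∃ m ∈ ball O δ, MetricBtw O m a ∧ m ≠ O := by
  have hd : 0 < dist O a := dist_pos.2 h
  have hs : δ / (δ + dist O a) ∈ Icc (0 : ℝ) 1 :=
    ⟨by positivity, by rw [div_le_one (by positivity)]; linarith⟩
  have hdist := dist_left_geodesicMap O a hs
  refine ⟨geodesicMap O a (δ / (δ + dist O a)), ?_, metricBtw_geodesicMap O a _, ?_⟩
  · rw [mem_ball', hdist, div_mul_eq_mul_div, div_lt_iff₀ (by positivity)]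
    nlinarith
  · rw [← dist_pos, dist_comm, hdist]
    positivity

end Noncollinear

end BusemannSpace

/-! ### Angle change along planar curves -/

section AngleChange

theorem exists_continuous_log {X : Type*} [TopologicalSpace X] [LocallyPathConnectedSpace X]
    [SimplyConnectedSpace X] {f : X → ℂ} (hf : Continuous f) (h0 : ∀ x, f x ≠ 0) :
    ∃ g : X → ℂ, Continuous g ∧ ∀ x, Complex.exp (g x) = f x := by
  have x₀ : X := Classical.choice inferInstance
  obtain ⟨g, ⟨-, hg⟩, -⟩ := Complex.isCoveringMapOn_exp.existsUnique_continuousMap_lifts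
    (⟨f, hf⟩ : C(X, ℂ)) (a₀ := x₀) (Complex.exp_log (h0 x₀)) (fun x => h0 x)
  exact ⟨g, g.continuous, congrFun hg⟩

theorem sub_eq_sub_of_exp_eq {X : Type*} [TopologicalSpace X] [PreconnectedSpace X] {g g' : X → ℂ}
    (hg : Continuous g) (hg' : Continuous g') (h : ∀ x, Complex.exp (g x) = Complex.exp (g' x))
    (x y : X) : g y - g x = g' y - g' x := by
  have heq : g = fun z => g' z + (g x - g' x) := by
    refine Complex.isCoveringMap_exp.eq_of_comp_eq hg (by fun_prop) (funext fun z => ?_) x (by simp)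
    simp [Complex.exp_add, Complex.exp_sub, h]
  rw [heq]
  ring

open Classical in
/-- The change of argument along the curve `f : [0, 1] → ℂ \ {0}`, computed from a continuous
logarithm of `f` on `ℝ`. The junk value `0` is taken when there is no such logarithm. -/
noncomputable def angleChange (f : ℝ → ℂ) : ℝ :=
  if h : ∃ g : ℝ → ℂ, Continuous g ∧ ∀ s, Complex.exp (g s) = f s then
    (h.choose 1 - h.choose 0).im else 0

theorem angleChange_eq {f g : ℝ → ℂ} (hg : Continuous g) (h : ∀ s, Complex.exp (g s) = f s) :
    angleChange f = (g 1 - g 0).im := by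
  have hex : ∃ g : ℝ → ℂ, Continuous g ∧ ∀ s, Complex.exp (g s) = f s := ⟨g, hg, h⟩
  rw [angleChange, dif_pos hex,
    sub_eq_sub_of_exp_eq hex.choose_spec.1 hg fun x => by rw [hex.choose_spec.2, h]]

end AngleChange

/-! ### Angles and orientation on a Busemann surface -/

/-- `IsBusemannSurface` as a typeclass. -/
class BusemannSurface (S : Type*) [MetricSpace S] : Prop extends BusemannSpace S where
  homeo : Nonempty (S ≃ₜ ℝ × ℝ)

section Orientation

variable {S : Type*} [MetricSpace S] [BusemannSurface S] {t p q r s a b : S}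

/-- A chart identifying the surface with the complex plane, in which angles are measured. -/
noncomputable def planeChart (S : Type*) [MetricSpace S] [BusemannSurface S] : S ≃ₜ ℂ :=
  (BusemannSurface.homeo (S := S)).some.trans Complex.equivRealProdCLM.symm.toHomeomorph

@[fun_prop]
theorem continuous_planeChart : Continuous (planeChart S) := (planeChart S).continuous

theorem planeChart_sub_ne_zero (h : p ≠ q) : planeChart S p - planeChart S q ≠ 0 :=
  sub_ne_zero.2 ((planeChart S).injective.ne h)

theorem planeChart_geodesicMap_sub_ne_zero (h : ¬ MetricBtw q p r) (s : ℝ) :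
    planeChart S (geodesicMap q r s) - planeChart S p ≠ 0 :=
  planeChart_sub_ne_zero fun e => h (e ▸ metricBtw_geodesicMap q r s)

/-- The angle, measured in the chart, under which `p` sees the geodesic from `q` to `r`. -/
noncomputable def viewAngle (p q r : S) : ℝ :=
  angleChange fun s => planeChart S (geodesicMap q r s) - planeChart S p

theorem exists_log_viewAngle (h : ¬ MetricBtw q p r) : ∃ g : ℝ → ℂ, Continuous g ∧
    (∀ s, Complex.exp (g s) = planeChart S (geodesicMap q r s) - planeChart S p) ∧
    viewAngle p q r = (g 1 - g 0).im := by
  obtain ⟨g, hg, he⟩ := exists_continuous_log (by fun_prop) (planeChart_geodesicMap_sub_ne_zero h)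
  exact ⟨g, hg, he, angleChange_eq hg he⟩

theorem viewAngle_swap (h : ¬ MetricBtw q p r) : viewAngle p r q = -viewAngle p q r := by
  obtain ⟨g, hg, he, hview⟩ := exists_log_viewAngle h
  rw [hview, viewAngle, angleChange_eq (g := fun s => g (1 - s)) (by fun_prop)
    fun s => by rw [he, geodesicMap_swap q r]]
  simp

theorem exists_exp_eq_div_viewAngle (h : ¬ MetricBtw q p r) : ∃ D : ℂ, D.im = viewAngle p q r ∧
    Complex.exp D = (planeChart S r - planeChart S p) / (planeChart S q - planeChart S p) := by
  obtain ⟨g, -, he, hview⟩ := exists_log_viewAngle h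
  exact ⟨g 1 - g 0, hview.symm, by simp [Complex.exp_sub, he]⟩

theorem continuous_viewAngle {u v w : ℝ → S} (hu : Continuous u) (hv : Continuous v)
    (hw : Continuous w) (h : ∀ τ, ¬ MetricBtw (v τ) (u τ) (w τ)) :
    Continuous fun τ => viewAngle (u τ) (v τ) (w τ) := by
  obtain ⟨G, hG, he⟩ := exists_continuous_log (X := ℝ × ℝ)
    (f := fun x => planeChart S (geodesicMap (v x.1) (w x.1) x.2) - planeChart S (u x.1))
    (by fun_prop) fun x => planeChart_geodesicMap_sub_ne_zero (h _) _
  have hview : ∀ τ, viewAngle (u τ) (v τ) (w τ) = (G (τ, 1) - G (τ, 0)).im := fun τ =>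
    angleChange_eq (g := fun s => G (τ, s)) (by fun_prop) fun s => he _
  simp only [hview]
  fun_prop

/-- The sum of the signed angles of a geodesic triangle. -/
noncomputable def angleSum (p q r : S) : ℝ :=
  viewAngle p q r + viewAngle q r p + viewAngle r p q

theorem angleSum_rotate (p q r : S) : angleSum q r p = angleSum p q r := by
  rw [angleSum, angleSum]; ring

theorem angleSum_swap_left (h : Noncollinear p q r) : angleSum q p r = -angleSum p q r := by
  rw [angleSum, angleSum, viewAngle_swap (mt MetricBtw.symm h.2.2),
    viewAngle_swap (mt MetricBtw.symm h.1), viewAngle_swap (mt MetricBtw.symm h.2.1)]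
  ring

theorem angleSum_eq_odd_mul_pi (h : Noncollinear p q r) :
    ∃ k : ℤ, angleSum p q r = (2 * k + 1) * Real.pi := by
  obtain ⟨D₁, hD₁, he₁⟩ := exists_exp_eq_div_viewAngle (mt MetricBtw.symm h.2.2)
  obtain ⟨D₂, hD₂, he₂⟩ := exists_exp_eq_div_viewAngle (mt MetricBtw.symm h.1)
  obtain ⟨D₃, hD₃, he₃⟩ := exists_exp_eq_div_viewAngle (mt MetricBtw.symm h.2.1)
  have hqp := planeChart_sub_ne_zero h.ne₁₂.symm
  have hrq := planeChart_sub_ne_zero h.ne₂₃.symm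
  have hpr := planeChart_sub_ne_zero h.ne₃₁.symm
  have hexp : Complex.exp (D₁ + D₂ + D₃) = Complex.exp (Real.pi * Complex.I) := by
    rw [Complex.exp_add, Complex.exp_add, he₁, he₂, he₃, Complex.exp_pi_mul_I]
    field_simp
    ring
  obtain ⟨n, hn⟩ := Complex.exp_eq_exp_iff_exists_int.1 hexp
  have him : D₁.im + D₂.im + D₃.im = Real.pi + n * (2 * Real.pi) := by
    simpa using congrArg Complex.im hn
  exact ⟨n, by rw [angleSum, ← hD₁, ← hD₂, ← hD₃, him]; ring⟩

theorem cos_angleSum_div_two (h : Noncollinear p q r) : Real.cos (angleSum p q r / 2) = 0 := by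
  obtain ⟨k, hk⟩ := angleSum_eq_odd_mul_pi h
  exact Real.cos_eq_zero_iff.2 ⟨k, by rw [hk]⟩

theorem continuous_angleSum {u v w : ℝ → S} (hu : Continuous u) (hv : Continuous v)
    (hw : Continuous w) (h : ∀ τ, Noncollinear (u τ) (v τ) (w τ)) :
    Continuous fun τ => angleSum (u τ) (v τ) (w τ) :=
  ((continuous_viewAngle hu hv hw fun τ => mt MetricBtw.symm (h τ).2.2).add
    (continuous_viewAngle hv hw hu fun τ => mt MetricBtw.symm (h τ).1)).add
    (continuous_viewAngle hw hu hv fun τ => mt MetricBtw.symm (h τ).2.1)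

open Classical in
/-- The orientation of a noncollinear triple. Its angle sum is an odd multiple of `π`, so the
sine below is `1` or `-1`; a positively oriented Euclidean triangle has angle sum `π`. -/
noncomputable def orient (p q r : S) : Bool :=
  decide (0 < Real.sin (angleSum p q r / 2))

theorem sin_angleSum_div_two (h : Noncollinear p q r) :
    Real.sin (angleSum p q r / 2) = if orient p q r then 1 else -1 := by
  rcases Real.cos_eq_zero_iff_sin_eq.1 (cos_angleSum_div_two h) with hs | hs <;>
    norm_num [orient, hs]

theorem orient_rotate (p q r : S) : orient q r p = orient p q r := by
  rw [orient, orient, angleSum_rotate]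

theorem orient_swap_left (h : Noncollinear p q r) : orient q p r = !orient p q r := by
  have hs := sin_angleSum_div_two h.swap_left
  rw [angleSum_swap_left h, neg_div, Real.sin_neg, sin_angleSum_div_two h] at hs
  cases hq : orient q p r <;> cases hp : orient p q r <;>
    first | rfl | norm_num [hq, hp] at hs

theorem orient_swap_right (h : Noncollinear p q r) : orient p r q = !orient p q r := by
  rw [← orient_swap_left h, ← orient_rotate p r q, ← orient_rotate r q p]

theorem orient_eq_of_continuous {x : ℝ → S} (hx : Continuous x)
    (hn : ∀ τ, Noncollinear a b (x τ)) (τ τ' : ℝ) : orient a b (x τ) = orient a b (x τ') := by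
  have hcont : Continuous fun τ => Real.sin (angleSum a b (x τ) / 2) :=
    Real.continuous_sin.comp
      ((continuous_angleSum continuous_const continuous_const hx hn).div_const 2)
  have hsq : EqOn ((fun τ => Real.sin (angleSum a b (x τ) / 2)) ^ 2) 1 univ := fun τ _ => by
    simp [Real.sin_sq, cos_angleSum_div_two (hn τ)]
  rcases isPreconnected_univ.eq_one_or_eq_neg_one_of_sq_eq hcont.continuousOn hsq with h | h <;>
    simp only [orient, h (mem_univ τ), h (mem_univ τ'), Pi.one_apply, Pi.neg_apply]

theorem orient_eq_of_continuousOn {x : ℝ → S} {s t : ℝ} (hst : s ≤ t)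
    (hx : ContinuousOn x (Icc s t)) (hn : ∀ τ ∈ Icc s t, Noncollinear a b (x τ)) :
    orient a b (x s) = orient a b (x t) := by
  have hproj : Continuous fun τ => x (projIcc s t hst τ) :=
    hx.comp_continuous (continuous_subtype_val.comp continuous_projIcc) fun τ => Subtype.prop _
  simpa [projIcc_left, projIcc_right] using
    orient_eq_of_continuous hproj (fun τ => hn _ (Subtype.prop _)) s t

/-- The total angle under which `t` sees the boundary of the geodesic triangle `p q r`. -/
noncomputable def windingAngle (t p q r : S) : ℝ :=
  viewAngle t p q + viewAngle t q r + viewAngle t r p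

theorem windingAngle_cocycle (hp : ¬ MetricBtw s t p) (hq : ¬ MetricBtw s t q)
    (hr : ¬ MetricBtw s t r) :
    windingAngle t p q r = windingAngle t s p q + windingAngle t s q r + windingAngle t s r p := by
  simp only [windingAngle, viewAngle_swap hp, viewAngle_swap hq, viewAngle_swap hr]
  ring

/-- The geodesics from `p` to the side `q r` fill the triangle and avoid `t`, so a logarithm exists
on the whole triangle. -/
theorem windingAngle_eq_zero (hf : ∀ z, MetricBtw q z r → ¬ MetricBtw p t z) :
    windingAngle t p q r = 0 := by
  have hpr : ¬ MetricBtw p t r := hf r (metricBtw_right _ _)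
  obtain ⟨G, hG, he⟩ := exists_continuous_log (X := ℝ × ℝ)
    (f := fun x => planeChart S (geodesicMap p (geodesicMap q r x.1) x.2) - planeChart S t)
    (by fun_prop) fun x => planeChart_geodesicMap_sub_ne_zero (hf _ (metricBtw_geodesicMap _ _ _)) _
  have hpq : viewAngle t p q = (G (0, 1) - G (0, 0)).im :=
    angleChange_eq (g := fun s => G (0, s)) (by fun_prop) fun s => by simp [he]
  have hqr : viewAngle t q r = (G (1, 1) - G (0, 1)).im :=
    angleChange_eq (g := fun s => G (s, 1)) (by fun_prop) fun s => by simp [he]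
  have hpr' : viewAngle t p r = (G (1, 1) - G (1, 0)).im :=
    angleChange_eq (g := fun s => G (1, s)) (by fun_prop) fun s => by simp [he]
  have hp : G (1, 0) - G (0, 0) = 0 := by
    simpa using sub_eq_sub_of_exp_eq (g := fun s : ℝ => G (s, 0)) (g' := fun _ => G (0, 0))
      (by fun_prop) (by fun_prop) (fun s => by simp [he]) 0 1
  rw [windingAngle, viewAngle_swap hpr, hpq, hqr, hpr', sub_eq_zero.1 hp]
  simp only [Complex.sub_im]
  ring

theorem exists_metricBtw_of_windingAngle_ne_zero (h : windingAngle t p q r ≠ 0) :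
    ∃ z, MetricBtw q z r ∧ MetricBtw p t z := by
  contrapose! h
  exact windingAngle_eq_zero h

theorem angleSum_eq_add_add (h : Noncollinear p q r)
    (ht : windingAngle t p q r = 0) (hp : windingAngle p q t r = 0)
    (hq : windingAngle q r t p = 0) (hr : windingAngle r p t q = 0) :
    angleSum p q r = angleSum t p q + angleSum t q r + angleSum t r p := by
  rw [windingAngle] at ht hp hq hr
  rw [viewAngle_swap (mt MetricBtw.symm h.2.2)] at hp
  rw [viewAngle_swap (mt MetricBtw.symm h.1)] at hq
  rw [viewAngle_swap (mt MetricBtw.symm h.2.1)] at hr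
  rw [angleSum, angleSum, angleSum, angleSum]
  linarith

theorem orient_eq_not_xor (h : Noncollinear p q r) (h₁ : Noncollinear t p q)
    (h₂ : Noncollinear t q r) (h₃ : Noncollinear t r p)
    (ht : windingAngle t p q r = 0) (hp : windingAngle p q t r = 0)
    (hq : windingAngle q r t p = 0) (hr : windingAngle r p t q = 0) :
    orient p q r = !(orient t p q ^^ orient t q r ^^ orient t r p) := by
  have hsin := sin_angleSum_div_two h
  rw [angleSum_eq_add_add h ht hp hq hr, add_div, add_div, Real.sin_add, Real.sin_add, Real.cos_add,
    cos_angleSum_div_two h₁, cos_angleSum_div_two h₂, cos_angleSum_div_two h₃,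
    sin_angleSum_div_two h₁, sin_angleSum_div_two h₂, sin_angleSum_div_two h₃] at hsin
  cases h0 : orient p q r <;> cases h1 : orient t p q <;> cases h2 : orient t q r <;>
    cases h3 : orient t r p <;> first | rfl | norm_num [h0, h1, h2, h3] at hsin

end Orientation

section OrientationCalculus

variable {S : Type*} [MetricSpace S] [BusemannSurface S]
  {a b c b' x y z w p q r t a₁ a₂ b₁ b₂ : S}

theorem orient_perms (h : Noncollinear a b c) :
    orient b c a = orient a b c ∧ orient c a b = orient a b c ∧ orient b a c = (!orient a b c) ∧
      orient a c b = (!orient a b c) ∧ orient c b a = !orient a b c :=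
  ⟨orient_rotate a b c, (orient_rotate c a b).symm, orient_swap_left h, orient_swap_right h, by
    rw [← orient_rotate c b a, orient_swap_left h]⟩

theorem exists_collinear_of_orient_ne (h : orient a b x ≠ orient a b y) :
    ∃ z, MetricBtw x z y ∧ (MetricBtw a b z ∨ MetricBtw b z a ∨ MetricBtw z a b) := by
  contrapose! h
  simpa using orient_eq_of_continuous (x := geodesicMap x y) (by fun_prop)
    (fun τ => h _ (metricBtw_geodesicMap x y τ)) 0 1

theorem orient_extend (h : Noncollinear a b c) (hb : MetricBtw a b b') :
    orient a b' c = orient a b c := by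
  have hpath := orient_eq_of_continuous (a := c) (b := a) (x := geodesicMap b b') (by fun_prop)
    (fun τ => (h.extend (hb.trans_right_left (metricBtw_geodesicMap b b' τ))).rotate.rotate) 1 0
  simpa only [geodesicMap_zero, geodesicMap_one, orient_rotate c a] using hpath

theorem orient_eq_of_metricBtw (hb : MetricBtw x y z) (h : Noncollinear x y w)
    (h' : Noncollinear y z w) : orient x y w = orient y z w := by
  have hxz := orient_extend h hb
  have hzx := orient_extend h'.swap_left hb.symm
  have hperm := orient_perms (h.extend hb)
  have hperm' := orient_perms h'
  grind

theorem orient_eq_of_fan (hz : MetricBtw q z r) (ht : MetricBtw p t z) (h : Noncollinear p q t) :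
    orient p q t = orient p q r := by
  have hpt := h.swap_right
  have hpz := hpt.extend ht
  have hqz : Noncollinear q z p := hpz.rotate.swap_left
  have hpt_pz := orient_extend hpt ht
  have hqz_qr := orient_extend hqz hz
  have hperm := orient_perms hpt
  have hperm' := orient_perms hpz
  have hperm'' := orient_perms (hqz.extend hz)
  grind

theorem windingAngle_eq_zero_of_orient_eq (hpq : Noncollinear t p q) (hqr : Noncollinear t q r)
    (he : orient t p q = orient t q r) : windingAngle p q t r = 0 := by
  by_contra hne
  obtain ⟨z, hz, hp⟩ := exists_metricBtw_of_windingAngle_ne_zero hne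
  have hfan := orient_eq_of_fan hz hp hpq.rotate.rotate
  rw [orient_swap_left hqr, ← he, ← orient_rotate q t p] at hfan
  simp at hfan

/-- `t` lies strictly inside the triangle `p q r`: it is in general position with respect to the
vertices and on the inner side of the three edges. -/
structure InsideTriangle (t p q r : S) : Prop where
  noncollinear : Noncollinear p q r
  noncollinear₁₂ : Noncollinear t p q
  noncollinear₂₃ : Noncollinear t q r
  noncollinear₃₁ : Noncollinear t r p
  orient₁₂ : orient t p q = orient p q r
  orient₂₃ : orient t q r = orient p q r
  orient₃₁ : orient t r p = orient p q r

namespace InsideTriangle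

theorem windingAngle_ne_zero (h : InsideTriangle t p q r) : windingAngle t p q r ≠ 0 := by
  obtain ⟨hpqr, hpq, hqr, hrp, epq, eqr, erp⟩ := h
  intro ht
  have hxor := orient_eq_not_xor hpqr hpq hqr hrp ht
    (windingAngle_eq_zero_of_orient_eq hpq hqr (epq.trans eqr.symm))
    (windingAngle_eq_zero_of_orient_eq hqr hrp (eqr.trans erp.symm))
    (windingAngle_eq_zero_of_orient_eq hrp hpq (erp.trans epq.symm))
  rw [epq, eqr, erp] at hxor
  cases horient : orient p q r <;> simp [horient] at hxor

theorem exists_metricBtw (h : InsideTriangle t p q r) : ∃ z, MetricBtw q z r ∧ MetricBtw p t z :=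
  exists_metricBtw_of_windingAngle_ne_zero h.windingAngle_ne_zero

end InsideTriangle

/-- Each segment meets the line through the other; the two intersection points cannot both lie
outside the segments. -/
theorem exists_metricBtw_metricBtw_of_orient_ne (h₁ : Noncollinear a₁ b₁ a₂)
    (h₂ : Noncollinear a₁ b₁ b₂) (e₁ : orient a₁ b₁ a₂ ≠ orient a₁ b₁ b₂)
    (e₂ : orient b₂ a₂ a₁ ≠ orient b₂ a₂ b₁) :
    ∃ O, MetricBtw a₁ O b₁ ∧ MetricBtw a₂ O b₂ := by
  obtain ⟨z, hz, hbeyond | hinside | hbefore⟩ := exists_collinear_of_orient_ne e₁ <;>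
  obtain ⟨w, hw, hbeyond' | hinside' | hbefore'⟩ := exists_collinear_of_orient_ne e₂
  · exact (h₁.not_metricBtw_of_metricBtw hz hbeyond hw hbeyond').elim
  · exact ⟨w, hw, hinside'⟩
  · exact (h₂.not_metricBtw_of_metricBtw hz.symm hbeyond hw hbefore'.symm).elim
  · exact ⟨z, hinside.symm, hz⟩
  · exact ⟨z, hinside.symm, hz⟩
  · exact ⟨z, hinside.symm, hz⟩
  · exact (h₁.swap_left.not_metricBtw_of_metricBtw hz hbefore.symm hw.symm hbeyond').elim
  · exact ⟨w, hw, hinside'⟩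
  · exact (h₂.swap_left.not_metricBtw_of_metricBtw hz.symm hbefore.symm hw.symm
      hbefore'.symm).elim

end OrientationCalculus

section PuncturedBall

theorem exists_path_punctured_ball_complex {z₀ u v : ℂ} {r : ℝ} (hu : u ∈ ball z₀ r)
    (hv : v ∈ ball z₀ r) (hu₀ : u ≠ z₀) (hv₀ : v ≠ z₀) :
    ∃ γ : ℝ → ℂ, Continuous γ ∧ γ 0 = u ∧ γ 1 = v ∧
      ∀ τ ∈ Icc (0 : ℝ) 1, γ τ ≠ z₀ ∧ γ τ ∈ ball z₀ r := by
  have hr : 0 < r := pos_of_mem_ball hu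
  have exp_log_u := Complex.exp_log (sub_ne_zero.2 hu₀)
  have exp_log_v := Complex.exp_log (sub_ne_zero.2 hv₀)
  have log_lt : ∀ {z}, z ∈ ball z₀ r → z ≠ z₀ → (Complex.log (z - z₀)).re < Real.log r := by
    intro z hz hne
    rw [Complex.log_re]
    exact Real.log_lt_log (norm_pos_iff.2 (sub_ne_zero.2 hne)) (mem_ball_iff_norm.1 hz)
  refine ⟨fun τ => z₀ + Complex.exp (AffineMap.lineMap (Complex.log (u - z₀))
    (Complex.log (v - z₀)) τ), ?_, by simp [exp_log_u], by simp [exp_log_v],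
    fun τ hτ => ⟨by simp, ?_⟩⟩
  · have := AffineMap.lineMap_continuous (R := ℝ) (p := Complex.log (u - z₀))
      (q := Complex.log (v - z₀))
    fun_prop
  · have hconvex := convex_halfSpace_lt (f := Complex.re) Complex.reLm.isLinear (Real.log r)
    rw [mem_ball_iff_norm, add_sub_cancel_left, Complex.norm_exp, ← Real.lt_log_iff_exp_lt hr]
    exact hconvex.lineMap_mem (log_lt hu hu₀) (log_lt hv hv₀) hτ

theorem exists_path_punctured_ball {S : Type*} [MetricSpace S] (e : S ≃ₜ ℂ) (O : S) {ρ : ℝ}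
    (hρ : 0 < ρ) : ∃ δ > 0, ∀ x ∈ ball O δ, ∀ y ∈ ball O δ, x ≠ O → y ≠ O →
      ∃ γ : ℝ → S, Continuous γ ∧ γ 0 = x ∧ γ 1 = y ∧
        ∀ τ ∈ Icc (0 : ℝ) 1, γ τ ≠ O ∧ γ τ ∈ ball O ρ := by
  obtain ⟨r, hr, hball⟩ := Metric.mem_nhds_iff.1
    (e.symm.continuous.continuousAt.preimage_mem_nhds (x := e O) (by
      simpa using ball_mem_nhds O hρ))
  obtain ⟨δ, hδ, hsub⟩ := Metric.mem_nhds_iff.1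
    (e.continuous.continuousAt.preimage_mem_nhds (ball_mem_nhds (e O) hr))
  refine ⟨δ, hδ, fun x hx y hy hxO hyO => ?_⟩
  obtain ⟨γ, hγ, h0, h1, hmem⟩ := exists_path_punctured_ball_complex (hsub hx) (hsub hy)
    (e.injective.ne hxO) (e.injective.ne hyO)
  refine ⟨e.symm ∘ γ, e.symm.continuous.comp hγ, by simp [h0], by simp [h1], fun τ hτ => ⟨?_, ?_⟩⟩
  · rw [Function.comp_apply, Ne, e.symm_apply_eq]
    exact (hmem τ hτ).1
  · exact hball (hmem τ hτ).2

end PuncturedBall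

section Star

variable {S : Type*} [MetricSpace S] [BusemannSurface S] {O a b c d j k l x y x' y' : S}

/-- A path issuing from the leg of `a` whose first contact with the legs of `j`, `k`, `l` is on the
leg of `j` does not cross the line `k O l` before. -/
theorem orient_eq_of_first_contact {γ : ℝ → S} {t ρ : ℝ} (hγ : Continuous γ) (ht : 0 ≤ t)
    (ha : MetricBtw O (γ 0) a) (hj : MetricBtw O (γ t) j) (hγO : γ t ≠ O) (hka : MetricBtw k O a)
    (hkj : MetricBtw k O j) (hkl : MetricBtw k O l) (hjl : MetricBtw j O l)
    (hk : ρ ≤ dist O k) (hl : ρ ≤ dist O l) (hball : ∀ τ ∈ Icc 0 t, γ τ ∈ ball O ρ)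
    (hnk : ∀ τ ∈ Ico 0 t, ¬ MetricBtw O (γ τ) k) (hnl : ∀ τ ∈ Ico 0 t, ¬ MetricBtw O (γ τ) l) :
    orient k a l = orient k j l := by
  have hnc : ∀ τ ∈ Icc 0 t, Noncollinear k l (γ τ) := by
    intro τ hτ
    have hdist : dist O (γ τ) < ρ := mem_ball'.1 (hball τ hτ)
    refine noncollinear_of_dist_lt (hdist.trans_le hk) (hdist.trans_le hl) hkl ?_ ?_ <;>
      rcases eq_or_lt_of_le hτ.2 with rfl | hlt
    · exact fun h => hγO (hj.eq_of_legs h hkj.symm)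
    · exact hnk τ ⟨hτ.1, hlt⟩
    · exact fun h => hγO (hj.eq_of_legs h hjl)
    · exact hnl τ ⟨hτ.1, hlt⟩
  have h0 := hnc 0 ⟨le_rfl, ht⟩
  have h1 := hnc t ⟨ht, le_rfl⟩
  rw [orient_extend h0.swap_right (hka.trans_right ha),
    orient_extend h1.swap_right (hkj.trans_right hj), orient_swap_right h0, orient_swap_right h1,
    orient_eq_of_continuousOn ht hγ.continuousOn hnc]

/-- Walk around `O` from the leg of `a` until one of the other three legs is hit. -/
theorem orient_eq_or_of_star (hab : MetricBtw a O b) (hac : MetricBtw a O c)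
    (hbc : MetricBtw b O c) (hbd : MetricBtw b O d) (hcd : MetricBtw c O d)
    (na : O ≠ a) (nb : O ≠ b) (nc : O ≠ c) (nd : O ≠ d) :
    orient c a d = orient c b d ∨ orient b a d = orient b c d ∨ orient b a c = orient b d c := by
  obtain ⟨ρ, hρ, hρb, hρc, hρd⟩ : ∃ ρ > 0, ρ ≤ dist O b ∧ ρ ≤ dist O c ∧ ρ ≤ dist O d :=
    ⟨min (dist O b) (min (dist O c) (dist O d)), by simp [nb, nc, nd], by simp, by simp, by simp⟩
  obtain ⟨δ, hδ, hpath⟩ := exists_path_punctured_ball (planeChart S) O hρ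
  obtain ⟨x, hxδ, hx, hxO⟩ := exists_mem_leg_ball na hδ
  obtain ⟨y, hyδ, hy, hyO⟩ := exists_mem_leg_ball nb hδ
  obtain ⟨γ, hγ, rfl, rfl, hγball⟩ := hpath x hxδ y hyδ hxO hyO
  have hcompact : IsCompact (Icc (0 : ℝ) 1 ∩
      γ ⁻¹' ({m | MetricBtw O m b} ∪ {m | MetricBtw O m c} ∪ {m | MetricBtw O m d})) :=
    isCompact_Icc.inter_right ((((isClosed_setOf_metricBtw O b).union
      (isClosed_setOf_metricBtw O c)).union (isClosed_setOf_metricBtw O d)).preimage hγ)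
  obtain ⟨t, ⟨htI, htm⟩, htmin⟩ := hcompact.exists_isLeast ⟨1, by simp, by simp [hy]⟩
  have hbefore : ∀ τ ∈ Ico 0 t,
      ¬ MetricBtw O (γ τ) b ∧ ¬ MetricBtw O (γ τ) c ∧ ¬ MetricBtw O (γ τ) d := by
    intro τ hτ
    by_contra hcon
    refine hτ.2.not_ge (htmin ⟨⟨hτ.1, hτ.2.le.trans htI.2⟩, ?_⟩)
    simp only [mem_preimage, mem_union, mem_ofPred_eq]
    tauto
  have hball : ∀ τ ∈ Icc 0 t, γ τ ∈ ball O ρ := fun τ hτ => (hγball τ ⟨hτ.1, hτ.2.trans htI.2⟩).2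
  have hO := (hγball t htI).1
  rcases htm with (hb | hc) | hd
  · exact .inl (orient_eq_of_first_contact hγ htI.1 hx hb hO hac.symm hbc.symm hcd hbd hρc hρd
      hball (fun τ hτ => (hbefore τ hτ).2.1) fun τ hτ => (hbefore τ hτ).2.2)
  · exact .inr (.inl (orient_eq_of_first_contact hγ htI.1 hx hc hO hab.symm hbc hbd hcd hρb hρd
      hball (fun τ hτ => (hbefore τ hτ).1) fun τ hτ => (hbefore τ hτ).2.2))
  · exact .inr (.inr (orient_eq_of_first_contact hγ htI.1 hx hd hO hab.symm hbd hbc hcd.symm hρb hρc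
      hball (fun τ hτ => (hbefore τ hτ).1) fun τ hτ => (hbefore τ hτ).2.1))

theorem metricBtw_of_orient_eq (hx : MetricBtw x O x') (hy : MetricBtw y O y') (nx : O ≠ x)
    (ny : O ≠ y) (hxy : Noncollinear x x' y) (hyx : Noncollinear y y' x)
    (he : orient x x' y = orient y y' x) : MetricBtw x O y := by
  by_contra hnot
  have hn : Noncollinear x O y :=
    ⟨hnot, fun h => hyx.swap_left.1 (hy.symm.trans_expand_right h ny),
      fun h => hxy.swap_left.1 (hx.symm.trans_expand_right h.symm nx)⟩
  rw [orient_extend hn hx, orient_extend hn.rotate.rotate.swap_right hy, orient_swap_right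
    hn.rotate.rotate, ← orient_rotate y x O] at he
  simp at he

end Star

/-! ### The axioms of a CC system -/

section Axioms

variable {S : Type*} [MetricSpace S] [BusemannSurface S] {O a b c d p q r s : S}

theorem orient_interiority_of_crossing (habc : Noncollinear a b c) (habd : Noncollinear a b d)
    (hacd : Noncollinear a c d) (hbcd : Noncollinear b c d) (had : MetricBtw a O d)
    (hbc : MetricBtw b O c) (h₁ : orient a b c = orient a c d) (h₂ : orient a c d = orient a d b) :
    orient b c d = orient a b c := by
  by_contra hne
  have perm_abc := orient_perms habc
  have perm_abd := orient_perms habd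
  have perm_acd := orient_perms hacd
  have perm_bcd := orient_perms hbcd
  have na : O ≠ a := by rintro rfl; exact habc.2.2 hbc.symm
  have nb : O ≠ b := by rintro rfl; exact habd.1 had
  have nc : O ≠ c := by rintro rfl; exact hacd.1 had
  have nd : O ≠ d := by rintro rfl; exact hbcd.swap_right.1 hbc
  have hab := metricBtw_of_orient_eq had hbc na nb habd.swap_right habc.rotate (by grind)
  have hac := metricBtw_of_orient_eq had hbc.symm na nc hacd.swap_right
    habc.rotate.rotate.swap_right (by grind)
  have hdb := metricBtw_of_orient_eq had.symm hbc nd nb habd.rotate.rotate hbcd (by grind)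
  have hdc := metricBtw_of_orient_eq had.symm hbc.symm nd nc hacd.rotate.rotate hbcd.swap_left
    (by grind)
  have hstar := orient_eq_or_of_star hab hac hbc hdb.symm hdc.symm na nb nc nd
  grind

theorem orient_interiority (habc : Noncollinear a b c) (habd : Noncollinear a b d)
    (hacd : Noncollinear a c d) (hbcd : Noncollinear b c d)
    (h₁ : orient a b c = orient a c d) (h₂ : orient a c d = orient a d b) :
    orient b c d = orient a b c := by
  by_contra hne
  have perm_abc := orient_perms habc
  have perm_abd := orient_perms habd
  have perm_acd := orient_perms hacd
  have perm_bcd := orient_perms hbcd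
  obtain ⟨w, hw, hbcw | hcwb | hwbc⟩ :=
    exists_collinear_of_orient_ne (a := b) (b := c) (x := a) (y := d) (by grind)
  · have := orient_eq_of_fan hw hbcw habc.swap_left
    grind
  · exact hne (orient_interiority_of_crossing habc habd hacd hbcd hw hcwb.symm h₁ h₂)
  · have := orient_eq_of_fan hw hwbc.symm habc.rotate.rotate
    grind

theorem windingAngle_eq_zero_of_same_side (hp : Noncollinear a s p) (hq : Noncollinear a s q)
    (h : Noncollinear s p q) (he : orient a s p = orient a s q) : windingAngle a s p q = 0 := by
  by_contra hne
  obtain ⟨z, hz, ha⟩ := exists_metricBtw_of_windingAngle_ne_zero hne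
  have hfan := orient_eq_of_fan hz ha hp.rotate
  have hfan' := orient_eq_of_fan hz.symm ha hq.rotate
  have perm_spq := orient_perms h
  have perm_asp := orient_perms hp
  have perm_asq := orient_perms hq
  grind

/-- Otherwise `a` would be surrounded by the triangle `p q r`, whereas the three triangles that `s`
spans with its edges do not wind around `a`. -/
theorem orient_transitivity (hpq : Noncollinear a p q) (hqr : Noncollinear a q r)
    (hrp : Noncollinear a r p) (hpqr : Noncollinear p q r) (hsp : Noncollinear a s p)
    (hsq : Noncollinear a s q) (hsr : Noncollinear a s r) (hspq : Noncollinear s p q)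
    (hsqr : Noncollinear s q r) (hsrp : Noncollinear s r p) :
    ¬ (orient a p q = orient a q r ∧ orient a q r = orient a r p ∧
      orient a s p = orient a s q ∧ orient a s q = orient a s r) := by
  rintro ⟨h₁, h₂, h₃, h₄⟩
  have hinterior := orient_interiority hpq hrp.swap_right hqr hpqr h₁ h₂
  have hwinding := InsideTriangle.windingAngle_ne_zero (t := a)
    ⟨hpqr, hpq, hqr, hrp, hinterior.symm, by rw [hinterior, h₁], by rw [hinterior, h₁, h₂]⟩
  rw [windingAngle_cocycle (mt MetricBtw.symm hsp.2.2) (mt MetricBtw.symm hsq.2.2)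
    (mt MetricBtw.symm hsr.2.2)] at hwinding
  simp [windingAngle_eq_zero_of_same_side hsp hsq hspq h₃,
    windingAngle_eq_zero_of_same_side hsq hsr hsqr h₄,
    windingAngle_eq_zero_of_same_side hsr hsp hsrp (h₃.trans h₄).symm] at hwinding

end Axioms

/-! ### CC systems -/

section VortexFree

variable {W : Type*} {K : W → W → Bool}

/-- A tournament, encoded by the Boolean arc `K y z` for `y ≠ z`, in which no vertex dominates or is
dominated by a cyclic triangle. -/
structure IsVortexFree (K : W → W → Bool) : Prop where
  antisymm : ∀ y z, y ≠ z → K z y = !K y z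
  no_vortex : ∀ p q r s, [p, q, r, s].Nodup →
    ¬ (K p q = K q r ∧ K q r = K r p ∧ K s p = K s q ∧ K s q = K s r)

namespace IsVortexFree

/-- On four vertices, switching permutes the four possible vortices. -/
theorem switch (hK : IsVortexFree K) (c : W → Bool) :
    IsVortexFree fun y z => K y z ^^ c y ^^ c z where
  antisymm y z hyz := by
    rw [hK.antisymm y z hyz]
    cases K y z <;> cases c y <;> cases c z <;> rfl
  no_vortex p q r s h := by
    have hpqrs := hK.no_vortex p q r s h
    have hsqrp := hK.no_vortex s q r p (by grind)
    have hsrpq := hK.no_vortex s r p q (by grind)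
    have hspqr := hK.no_vortex s p q r (by grind)
    have hanti : ∀ y z, y ≠ z → K z y = !K y z := hK.antisymm
    rw [hanti s r (by grind), hanti s p (by grind), hanti r p (by grind)] at hsqrp
    rw [hanti s p (by grind), hanti s q (by grind), hanti p q (by grind)] at hsrpq
    rw [hanti s q (by grind), hanti s r (by grind), hanti q r (by grind)] at hspqr
    cases c p <;> cases c q <;> cases c r <;> cases c s <;> grind

theorem trans_of_source (hK : IsVortexFree K) {u : W} {x : Bool} (hu : ∀ z, z ≠ u → K u z = x)
    {p q r : W} (hpq : p ≠ q) (hqr : q ≠ r) (h₁ : K p q = x) (h₂ : K q r = x) :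
    p ≠ r ∧ K p r = x := by
  have hqp := hK.antisymm p q hpq
  have hrq := hK.antisymm q r hqr
  have hpr : p ≠ r := by
    rintro rfl
    grind
  refine ⟨hpr, ?_⟩
  by_contra hne
  have hrp : K r p = x := by rw [hK.antisymm p r hpr, Bool.eq_not_of_ne hne, Bool.not_not]
  have hup := hu p
  have huq := hu q
  have hur := hu r
  have hvortex := hK.no_vortex p q r u
  grind

theorem exists_sink [Finite W] (hK : IsVortexFree K) {x : Bool}
    (hsource : ∃ u, ∀ z, z ≠ u → K u z = x) : ∃ m, ∀ z, z ≠ m → K m z = !x := by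
  obtain ⟨u, hu⟩ := hsource
  let R : W → W → Prop := fun z y => y ≠ z ∧ K y z = x
  have : IsTrans W R := ⟨fun _ _ _ hqp hrq =>
    hK.trans_of_source hu hrq.1 hqp.1 hrq.2 hqp.2⟩
  have : Std.Irrefl R := ⟨fun _ h => h.1 rfl⟩
  obtain ⟨m, -, hm⟩ := (Finite.wellFounded_of_trans_of_irrefl R).has_min univ ⟨u, mem_univ u⟩
  refine ⟨m, fun z hz => Bool.eq_not_of_ne fun h => hm z (mem_univ z) ⟨hz.symm, h⟩⟩

end IsVortexFree

end VortexFree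

section CCSystem

variable {ι : Type*} {σ : ι → ι → ι → Bool} {c : ι → Bool} {x : Bool} {a a' b b' f g v w y : ι}

/-- A CC system in the sense of Knuth, the combinatorial abstraction of the orientations of the
triples of a finite planar point set in general position. The value `σ i j k` is only meaningful
for distinct indices. -/
structure IsCCSystem (σ : ι → ι → ι → Bool) : Prop where
  rotate : ∀ i j k, σ j k i = σ i j k
  swap : ∀ i j k, [i, j, k].Nodup → σ j i k = !σ i j k
  interiority : ∀ i j k l, [i, j, k, l].Nodup → σ i j k = σ i k l → σ i k l = σ i l j →
    σ j k l = σ i j k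
  transitivity : ∀ v p q r s, [v, p, q, r, s].Nodup →
    ¬ (σ v p q = σ v q r ∧ σ v q r = σ v r p ∧ σ v s p = σ v s q ∧ σ v s q = σ v s r)

theorem IsCCSystem.swap_right (hσ : IsCCSystem σ) (i j k : ι) (h : [i, j, k].Nodup) :
    σ i k j = !σ i j k := by
  rw [← hσ.rotate i k j, ← hσ.rotate i j k, hσ.swap j k i (by grind)]

theorem IsCCSystem.isVortexFree_link (hσ : IsCCSystem σ) (v : ι) :
    IsVortexFree fun y z : {y // y ≠ v} => σ v y z where
  antisymm y z hyz := hσ.swap_right v y z (by grind)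
  no_vortex p q r s h := hσ.transitivity v p q r s (by grind)

/-- The oriented line through `i` and `j` separates the two classes of the cut `c`: apart from `i`
and `j`, the class `true` is on its left and the class `false` is on its right. -/
def IsBitangent (σ : ι → ι → ι → Bool) (c : ι → Bool) (i j : ι) : Prop :=
  i ≠ j ∧ ∀ k, k ≠ i → k ≠ j → σ i j k = c k

/-- A bitangent both of whose ends belong to the class `x`; these are the edges of the convex hull
of the class `x` that face the other class. -/
def IsFacingEdge (σ : ι → ι → ι → Bool) (c : ι → Bool) (x : Bool) (i j : ι) : Prop :=
  IsBitangent σ c i j ∧ c i = x ∧ c j = x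

theorem isSource_link_switch_iff (hσ : IsCCSystem σ) (hy : y ≠ v) :
    (∀ z, z ≠ v → z ≠ y → (σ v y z ^^ c y ^^ c z) = x) ↔
      (c y = x ∧ IsBitangent σ c v y) ∨ (c y = (!x) ∧ IsBitangent σ c y v) := by
  have hswap : ∀ z, z ≠ v → z ≠ y → σ y v z = !σ v y z := fun z hzv hzy =>
    hσ.swap v y z (by grind)
  have hxor : ∀ s t : Bool, (s ^^ c y ^^ t) = x ↔ if c y = x then s = t else (!s) = t := by
    intro s t
    cases s <;> cases t <;> cases c y <;> cases x <;> simp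
  simp only [hxor, IsBitangent]
  by_cases hyx : c y = x
  · simp [hyx, hy.symm]
  · simp only [Bool.eq_not_of_ne hyx, Bool.not_eq_self, if_false, false_and, false_or, true_and]
    exact ⟨fun h => ⟨hy, fun k hky hkv => by rw [hswap k hkv hky, h k hkv hky]⟩,
      fun h z hzv hzy => by rw [← hswap z hzv hzy, h.2 z hzy hzv]⟩

/-- The bitangents through `v` are the sources and the sinks of a switching of the link of `v`. -/
theorem exists_opposite_bitangent [Finite ι] (hσ : IsCCSystem σ)
    (h : ∃ y, (c y = x ∧ IsBitangent σ c v y) ∨ (c y = (!x) ∧ IsBitangent σ c y v)) :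
    ∃ y, (c y = (!x) ∧ IsBitangent σ c v y) ∨ (c y = x ∧ IsBitangent σ c y v) := by
  obtain ⟨y, h⟩ := h
  have hy : y ≠ v := by rcases h with h | h; exacts [h.2.1.symm, h.2.1]
  have hK := (hσ.isVortexFree_link v).switch fun z => c z
  have hsource := (isSource_link_switch_iff hσ hy).2 h
  obtain ⟨⟨m, hm⟩, hsink⟩ := hK.exists_sink (x := x) ⟨⟨y, hy⟩, fun z hz =>
    hsource z z.2 fun hzy => hz (Subtype.ext hzy)⟩
  refine ⟨m, ?_⟩
  simpa using (isSource_link_switch_iff (x := !x) hσ hm).1 fun z hzv hzm =>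
    hsink ⟨z, hzv⟩ fun h => hzm (congrArg Subtype.val h)

theorem IsFacingEdge.exists_bitangent_or_pred [Finite ι] (hσ : IsCCSystem σ)
    (h : IsFacingEdge σ c x v w) :
    (∃ z, c z = (!x) ∧ IsBitangent σ c v z) ∨ ∃ z, IsFacingEdge σ c x z v := by
  obtain ⟨z, hz | hz⟩ := exists_opposite_bitangent hσ ⟨w, .inl ⟨h.2.2, h.1⟩⟩
  · exact .inl ⟨z, hz⟩
  · exact .inr ⟨z, hz.2, hz.1, h.2.1⟩

theorem IsFacingEdge.exists_bitangent_or_succ [Finite ι] (hσ : IsCCSystem σ)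
    (h : IsFacingEdge σ c x w v) :
    (∃ z, c z = (!x) ∧ IsBitangent σ c z v) ∨ ∃ z, IsFacingEdge σ c x v z := by
  obtain ⟨z, hz | hz⟩ :=
    exists_opposite_bitangent (x := !x) hσ ⟨w, .inr ⟨by simp [h.2.1], h.1⟩⟩
  · exact .inr ⟨z, hz.2, h.2.2, by simpa using hz.1⟩
  · exact .inl ⟨z, hz⟩

theorem IsBitangent.eq_of_ne (hσ : IsCCSystem σ) (h : IsBitangent σ c a b)
    (h' : IsBitangent σ c a' b') (ha : c a = x) (ha' : c a' = x) (hb : c b = !x)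
    (hb' : c b' = !x) : a = a' := by
  by_contra hne
  have hab' : a ≠ b' := by rintro rfl; simp [ha] at hb'
  have hba' : b ≠ a' := by rintro rfl; simp [ha'] at hb
  have ea' := h.2 a' (Ne.symm hne) hba'.symm
  have ea := h'.2 a hne hab'
  by_cases hbb : b = b'
  · subst hbb
    have hswap := hσ.swap_right a b a' (by grind [h.1, h'.1])
    have hrot := hσ.rotate a a' b
    grind
  · have eb' := h.2 b' hab'.symm (Ne.symm hbb)
    have eb := h'.2 b hba' hbb
    have hint := hσ.interiority a b a' b' (by grind [h.1, h'.1])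
    have hswap := hσ.swap_right a b b' (by grind [h.1, h'.1])
    have hrot := hσ.rotate a a' b'
    have hrot' := hσ.rotate b a' b'
    cases x <;> grind

theorem IsBitangent.eq_of_left (hσ : IsCCSystem σ) (h : IsBitangent σ c a g)
    (h' : IsBitangent σ c a f) (hc : c g = c f) : g = f := by
  by_contra hne
  have hg := h.2 f h'.1.symm (Ne.symm hne)
  have hf := h'.2 g h.1.symm hne
  have hswap := hσ.swap_right a g f (by grind [h.1, h'.1])
  grind

theorem rightUnique_isFacingEdge (hσ : IsCCSystem σ) :
    Relator.RightUnique (IsFacingEdge σ c x) :=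
  fun _ _ _ h h' => h.1.eq_of_left hσ h'.1 (h.2.2.trans h'.2.2.symm)

theorem IsBitangent.not_isFacingEdge (hσ : IsCCSystem σ) (h : IsBitangent σ c b a)
    (hb : c b = !x) : ¬ IsFacingEdge σ c x a a' := by
  rintro ⟨h', -, ha'⟩
  have hne : a' ≠ b := by rintro rfl; simp [ha'] at hb
  have eb := h'.2 b h.1 hne.symm
  have ea' := h.2 a' hne h'.1.symm
  have hrot := hσ.rotate b a a'
  grind

/-- Seen from a point `b` of the other class, the facing edges all turn in the same direction. -/
theorem exists_rank_isFacingEdge [Finite ι] (hσ : IsCCSystem σ) (hb : c b = !x) :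
    ∃ μ : ι → ℕ, ∀ y f, IsFacingEdge σ c x y f → μ f < μ y := by
  refine ⟨fun y => {z | c z = x ∧ z ≠ y ∧ σ b y z = !x}.ncard, ?_⟩
  rintro y f ⟨h, hy, hf⟩
  have hby : b ≠ y := by rintro rfl; simp [hy] at hb
  have hbf : b ≠ f := by rintro rfl; simp [hf] at hb
  have hbyf : σ b y f = !x := by rw [← hσ.rotate b y f, h.2 b hby hbf, hb]
  have hbfy := hσ.swap_right b y f (by grind [h.1])
  refine ncard_lt_ncard ⟨?_, fun hsub => (hsub ⟨hf, h.1.symm, hbyf⟩).2.1 rfl⟩ (toFinite _)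
  rintro z ⟨hz, hzf, hbfz⟩
  have hbz : b ≠ z := by rintro rfl; simp [hz] at hb
  have hzy : z ≠ y := by rintro rfl; grind
  refine ⟨hz, hzy, ?_⟩
  by_contra hbyz
  have hyfz := h.2 z hzy hzf
  have hint := hσ.interiority b y f z (by grind [h.1])
  have hbzy := hσ.swap_right b y z (by grind)
  cases x <;> grind

theorem wellFounded_isFacingEdge [Finite ι] (hσ : IsCCSystem σ) (hb : c b = !x) :
    WellFounded (IsFacingEdge σ c x) := by
  obtain ⟨μ, hμ⟩ := exists_rank_isFacingEdge hσ hb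
  have : IsTrans ι fun y f => μ f < μ y := ⟨fun _ _ _ h h' => h'.trans h⟩
  have : Std.Irrefl fun y f => μ f < μ y := ⟨fun _ => lt_irrefl _⟩
  exact Subrelation.wf (hμ _ _) (Finite.wellFounded_of_trans_of_irrefl fun y f => μ f < μ y)

theorem wellFounded_flip_isFacingEdge [Finite ι] (hσ : IsCCSystem σ) (hb : c b = !x) :
    WellFounded (flip (IsFacingEdge σ c x)) := by
  obtain ⟨μ, hμ⟩ := exists_rank_isFacingEdge hσ hb
  exact Subrelation.wf (fun h => hμ _ _ h) (measure μ).wf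

theorem IsFacingEdge.reflTransGen [Finite ι] (hσ : IsCCSystem σ) (h₁ : IsBitangent σ c a b)
    (ha : c a = x) (hb : c b = !x) (h : IsFacingEdge σ c x y f) :
    Relation.ReflTransGen (IsFacingEdge σ c x) a y := by
  induction y using (wellFounded_isFacingEdge hσ hb).induction generalizing f with
  | _ y ih =>
    obtain ⟨z, hz, hyz⟩ | ⟨z, hzy⟩ := h.exists_bitangent_or_pred hσ
    · rw [h₁.eq_of_ne hσ hyz ha h.2.1 hb hz]
    · exact (ih z hzy hzy).tail hzy

theorem IsFacingEdge.exists_bitangents [Finite ι] (hσ : IsCCSystem σ) (hb : c b = !x)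
    (h : IsFacingEdge σ c x y f) :
    ∃ a₁ b₁ a₂ b₂, IsBitangent σ c a₁ b₁ ∧ IsBitangent σ c b₂ a₂ ∧
      c a₁ = x ∧ c b₁ = (!x) ∧ c a₂ = x ∧ c b₂ = !x := by
  obtain ⟨a₁, ⟨f₁, h₁⟩, hfirst⟩ := (wellFounded_isFacingEdge hσ hb).has_min
    {a | ∃ f, IsFacingEdge σ c x a f} ⟨y, f, h⟩
  obtain ⟨a₂, ⟨f₂, h₂⟩, hlast⟩ := (wellFounded_flip_isFacingEdge hσ hb).has_min
    {a | ∃ f, IsFacingEdge σ c x f a} ⟨f, y, h⟩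
  obtain ⟨b₁, hb₁, hab₁⟩ := (h₁.exists_bitangent_or_pred hσ).resolve_right
    fun ⟨z, hz⟩ => hfirst z ⟨a₁, hz⟩ hz
  obtain ⟨b₂, hb₂, hab₂⟩ := (h₂.exists_bitangent_or_succ hσ).resolve_right
    fun ⟨z, hz⟩ => hlast z ⟨a₂, hz⟩ hz
  exact ⟨a₁, b₁, a₂, b₂, hab₁, hab₂, h₁.2.1, hb₁, h₂.2.2, hb₂⟩

end CCSystem

/-! ### The facing chain is shorter than a detour through the crossing point -/

section Chain

variable {S : Type*} [MetricSpace S] [BusemannSurface S] {a b e f p : S}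

theorem InsideTriangle.shrink (h : InsideTriangle f p a b) (he : MetricBtw a e b) (hea : e ≠ a)
    (hn : Noncollinear p f e) (ho : orient p f e ≠ orient p f a) : InsideTriangle f p a e := by
  obtain ⟨hpab, hpa, hab, -, epa, eab, -⟩ := h
  have perm_pfe := orient_perms hn
  have perm_pfa := orient_perms hpa
  have perm_pab := orient_perms hpab
  have perm_fab := orient_perms hab
  have hep : ¬ MetricBtw a e p := fun h => by
    have := orient_extend hn.swap_right h.symm
    grind
  have hef : ¬ MetricBtw a e f := fun h => by
    have := orient_extend hn.rotate h.symm
    grind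
  have haep : Noncollinear a e p := hpab.rotate.shrink he hea hep
  have haef : Noncollinear a e f := hab.rotate.shrink he hea hef
  have perm_aep := orient_perms haep
  have perm_aef := orient_perms haef
  have hbe := orient_extend haep he
  have hbe' := orient_extend haef he
  refine ⟨haep.rotate.rotate, hpa, haef.rotate.rotate, hn.rotate, ?_, ?_, ?_⟩ <;>
    grind

theorem InsideTriangle.metricBtw_of_not_noncollinear (h : InsideTriangle f p a b)
    (he : MetricBtw a e b) (hn : ¬ Noncollinear p f e) : MetricBtw p f e := by
  by_contra hb
  obtain ⟨z, hz, hf⟩ := h.exists_metricBtw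
  refine hn ⟨hb, fun hfe => ?_, fun hep => ?_⟩
  · exact h.noncollinear₂₃.2.2 (he.of_btw_btw hz (hf.trans_left_right hfe.symm)).symm
  · have hfan := orient_eq_of_fan he hep.symm h.noncollinear₁₂.swap_right
    have perm_pfa := orient_perms h.noncollinear₁₂
    grind [h.orient₁₂, h.orient₂₃]

/-- The ray from `p` through `f` cuts the corner of the path `p e a`. -/
theorem InsideTriangle.exists_shortcut (h : InsideTriangle f p a b) (he : MetricBtw a e b)
    (hea : e ≠ a) (ho : Noncollinear p f e → orient p f e ≠ orient p f a) :
    ∃ z, MetricBtw a z b ∧ z ≠ a ∧ MetricBtw p f z ∧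
      dist p z + dist z a ≤ dist p e + dist e a := by
  by_cases hn : Noncollinear p f e
  · obtain ⟨z, hz, hf⟩ := (h.shrink he hea hn (ho hn)).exists_metricBtw
    refine ⟨z, he.trans_left hz, ?_, hf, ?_⟩
    · rintro rfl
      exact h.noncollinear₁₂.swap_left.1 hf
    · have hze : dist e z + dist z a = dist e a := hz.symm
      linarith [dist_triangle p e z]
  · exact ⟨e, he, hea, h.metricBtw_of_not_noncollinear he hn, le_rfl⟩

end Chain

section PathLength

variable {ι : Type*} [Fintype ι] {R : ι → ι → Prop} {d : ι → ι → ℝ} {i f : ι}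

open Classical in
/-- The total length of the `R`-edges that start at `i`. -/
noncomputable def outLength (R : ι → ι → Prop) (d : ι → ι → ℝ) (i : ι) : ℝ :=
  ∑ j with R i j, d i j

open Classical in
/-- The total length of the `R`-edges that can be reached from `i`; if `R` is the successor relation
of a path, this is the length of the part of the path that follows `i`. -/
noncomputable def pathLength (R : ι → ι → Prop) (d : ι → ι → ℝ) (i : ι) : ℝ :=
  ∑ j with Relation.ReflTransGen R i j, outLength R d j

theorem outLength_eq_zero (h : ∀ j, ¬ R i j) : outLength R d i = 0 := by
  simp [outLength, h]

theorem outLength_eq (hR : Relator.RightUnique R) (h : R i f) : outLength R d i = d i f := by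
  classical
  have hsingle : Finset.univ.filter (R i) = {f} := by
    ext j
    simpa using ⟨fun hj => hR hj h, fun hj => hj ▸ h⟩
  rw [outLength, hsingle, Finset.sum_singleton]

theorem pathLength_eq_zero (h : ∀ j, ¬ R i j) : pathLength R d i = 0 := by
  classical
  refine Finset.sum_eq_zero fun j hj => ?_
  obtain rfl | ⟨k, hk, -⟩ := (Finset.mem_filter.1 hj).2.cases_head
  · exact outLength_eq_zero h
  · exact absurd hk (h k)

theorem pathLength_eq_add (hR : Relator.RightUnique R) (hi : ¬ Relation.TransGen R i i)
    (h : R i f) : pathLength R d i = d i f + pathLength R d f := by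
  classical
  have hinsert : Finset.univ.filter (Relation.ReflTransGen R i) =
      insert i (Finset.univ.filter (Relation.ReflTransGen R f)) := by
    ext j
    simp only [Finset.mem_filter_univ, Finset.mem_insert]
    refine ⟨fun hj => ?_, ?_⟩
    · obtain rfl | ⟨k, hk, hkj⟩ := hj.cases_head
      · exact .inl rfl
      · exact .inr (hR hk h ▸ hkj)
    · rintro (rfl | hj)
      exacts [.refl, .head h hj]
  rw [pathLength, hinsert, Finset.sum_insert, outLength_eq hR h, pathLength]
  exact fun hf => hi (.head' h (Finset.mem_filter.1 hf).2)

theorem sum_outLength_eq_pathLength (h : ∀ j k, R j k → Relation.ReflTransGen R i j) :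
    ∑ j, outLength R d j = pathLength R d i := by
  classical
  refine (Finset.sum_filter_of_ne fun j _ hj => ?_).symm
  by_contra hij
  exact hj (outLength_eq_zero fun k hk => hij (h j k hk))

end PathLength

section Configuration

variable {S : Type*} [MetricSpace S] {ι : Type*} {q : ι → S} {c : ι → Bool} {x : Bool}
  {a a₁ b₁ a₂ b₂ f : ι} {e O : S}

/-- No point of the configuration `q` lies on the segment between two others. -/
def IsGeneric (q : ι → S) : Prop :=
  ∀ i j k, [i, j, k].Nodup → Noncollinear (q i) (q j) (q k)

variable [BusemannSurface S]

/-- The orientations of the triples of a configuration. -/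
noncomputable def orientations (q : ι → S) (i j k : ι) : Bool :=
  orient (q i) (q j) (q k)

theorem IsGeneric.isCCSystem (hq : IsGeneric q) : IsCCSystem (orientations q) where
  rotate i j k := orient_rotate _ _ _
  swap i j k h := orient_swap_left (hq i j k h)
  interiority i j k l h := by
    apply orient_interiority <;> exact hq _ _ _ (by grind)
  transitivity v p q r s h := by
    apply orient_transitivity <;> exact hq _ _ _ (by grind)

theorem IsGeneric.insideTriangle (hq : IsGeneric q) (h₂ : IsBitangent (orientations q) c b₂ a₂)
    (ha₂ : c a₂ = x) (hb₂ : c b₂ = !x) (h : IsFacingEdge (orientations q) c x a f)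
    (hf : f ≠ a₂) : InsideTriangle (q f) (q a) (q a₂) (q b₂) := by
  have ha : a ≠ a₂ := by
    rintro rfl
    exact h₂.not_isFacingEdge hq.isCCSystem hb₂ h
  have hab : a ≠ b₂ := by rintro rfl; simp [h.2.1] at hb₂
  have hfb : f ≠ b₂ := by rintro rfl; simp [h.2.2] at hb₂
  have haa₂b₂ := hq a a₂ b₂ (by grind [h₂.1])
  have hfaa₂ := hq f a a₂ (by grind [h.1.1])
  have hfa₂b₂ := hq f a₂ b₂ (by grind [h₂.1])
  have hfb₂a := hq f b₂ a (by grind [h.1.1])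
  have perm_aa₂b₂ := orient_perms haa₂b₂
  have perm_faa₂ := orient_perms hfaa₂
  have perm_fa₂b₂ := orient_perms hfa₂b₂
  have perm_fb₂a := orient_perms hfb₂a
  have ea₂ : orient (q a) (q f) (q a₂) = x := (h.1.2 a₂ ha.symm hf.symm).trans ha₂
  have eb₂ : orient (q a) (q f) (q b₂) = !x := (h.1.2 b₂ hab.symm hfb.symm).trans hb₂
  have ea : orient (q b₂) (q a₂) (q a) = x := (h₂.2 a hab ha).trans h.2.1
  have ef : orient (q b₂) (q a₂) (q f) = x := (h₂.2 f hfb hf).trans h.2.2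
  refine ⟨haa₂b₂, hfaa₂, hfa₂b₂, hfb₂a, ?_, ?_, ?_⟩ <;> cases x <;> grind

/-- Induction along the chain: the ray along its first edge `a f` meets the segment `e a₂` in a
point `z`, and the detour through `z` is not longer than the detour through `e`. -/
theorem IsGeneric.pathLength_le [Fintype ι] (hq : IsGeneric q)
    (h₂ : IsBitangent (orientations q) c b₂ a₂) (ha₂ : c a₂ = x) (hb₂ : c b₂ = !x)
    (he : MetricBtw (q a₂) e (q b₂)) (hea : e ≠ q a₂)
    (hside : ∀ g, IsFacingEdge (orientations q) c x a g → Noncollinear (q a) (q g) e →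
      orient (q a) (q g) e = !x) :
    pathLength (IsFacingEdge (orientations q) c x) (fun i j => dist (q i) (q j)) a ≤
      dist (q a) e + dist e (q a₂) := by
  have hσ := hq.isCCSystem
  have hlast : ∀ j, ¬ IsFacingEdge (orientations q) c x a₂ j := fun j =>
    h₂.not_isFacingEdge hσ hb₂
  have hacyclic := (wellFounded_isFacingEdge hσ hb₂).transGen.irrefl
  induction a using (wellFounded_flip_isFacingEdge hσ hb₂).induction generalizing e with
  | _ a ih =>
    by_cases hex : ∃ f, IsFacingEdge (orientations q) c x a f
    swap
    · rw [pathLength_eq_zero (not_exists.1 hex)]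
      positivity
    obtain ⟨f, hf⟩ := hex
    rw [pathLength_eq_add (rightUnique_isFacingEdge hσ) (hacyclic.irrefl a) hf]
    by_cases hfa₂ : f = a₂
    · subst hfa₂
      rw [pathLength_eq_zero hlast, add_zero]
      exact dist_triangle _ _ _
    have haa₂ : a₂ ≠ a := by rintro rfl; exact hlast f hf
    have hside_a₂ : orient (q a) (q f) (q a₂) = x :=
      (hf.1.2 a₂ haa₂ (Ne.symm hfa₂)).trans ha₂
    obtain ⟨z, hz, hza, hfz, hlen⟩ := (hq.insideTriangle h₂ ha₂ hb₂ hf hfa₂).exists_shortcut he hea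
      fun hn => by simp [hside f hf hn, hside_a₂]
    have hrest := ih f hf hz hza fun g hg hn => by
      have hga : g ≠ a := by rintro rfl; exact hacyclic.irrefl f (.tail (.single hg) hf)
      have hfag := hq a f g (by grind [hf.1.1, hg.1.1])
      rw [orient_swap_right hn.swap_right, ← orient_eq_of_metricBtw hfz hfag hn.swap_right]
      exact congrArg _ ((hf.1.2 g hga hg.1.1.symm).trans hg.2.2)
    have hdist : dist (q a) (q f) + dist (q f) z = dist (q a) z := hfz
    linarith

theorem IsGeneric.sum_outLength_le [Fintype ι] (hq : IsGeneric q)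
    (h₁ : IsBitangent (orientations q) c a₁ b₁) (h₂ : IsBitangent (orientations q) c b₂ a₂)
    (ha₁ : c a₁ = x) (hb₁ : c b₁ = !x) (ha₂ : c a₂ = x) (hb₂ : c b₂ = !x)
    (hO₁ : MetricBtw (q a₁) O (q b₁)) (hO₂ : MetricBtw (q a₂) O (q b₂)) :
    ∑ i, outLength (IsFacingEdge (orientations q) c x) (fun i j => dist (q i) (q j)) i ≤
      dist (q a₁) O + dist O (q a₂) := by
  have hσ := hq.isCCSystem
  rw [sum_outLength_eq_pathLength fun j k h => h.reflTransGen hσ h₁ ha₁ hb₁]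
  by_cases ha : a₁ = a₂
  · subst ha
    rw [pathLength_eq_zero fun j => h₂.not_isFacingEdge hσ hb₂]
    positivity
  refine hq.pathLength_le h₂ ha₂ hb₂ hO₂ ?_ fun g hg hn => ?_
  · rintro rfl
    exact (hq a₁ a₂ b₁ (by grind [h₁.1])).1 hO₁
  · have hgb : g ≠ b₁ := by rintro rfl; simp [hg.2.2] at hb₁
    rw [orient_swap_right hn.swap_right, ← orient_extend hn.swap_right hO₁]
    exact congrArg _ ((h₁.2 g hg.1.1.symm hgb).trans hg.2.2)

theorem IsGeneric.exists_crossing (hq : IsGeneric q)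
    (h₁ : IsBitangent (orientations q) c a₁ b₁) (h₂ : IsBitangent (orientations q) c b₂ a₂)
    (ha₁ : c a₁ = x) (hb₁ : c b₁ = !x) (ha₂ : c a₂ = x) (hb₂ : c b₂ = !x) :
    ∃ O, MetricBtw (q a₁) O (q b₁) ∧ MetricBtw (q a₂) O (q b₂) := by
  by_cases ha : a₁ = a₂
  · subst ha
    exact ⟨q a₁, metricBtw_left _ _, metricBtw_left _ _⟩
  by_cases hb : b₁ = b₂
  · subst hb
    exact ⟨q b₁, metricBtw_right _ _, metricBtw_right _ _⟩
  have hab₂ : a₁ ≠ b₂ := by rintro rfl; simp [ha₁] at hb₂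
  have hba₂ : b₁ ≠ a₂ := by rintro rfl; simp [ha₂] at hb₁
  have ea₂ := h₁.2 a₂ (Ne.symm ha) hba₂.symm
  have eb₂ := h₁.2 b₂ hab₂.symm (Ne.symm hb)
  have ea₁ := h₂.2 a₁ hab₂ ha
  have eb₁ := h₂.2 b₁ hb hba₂
  rw [orientations] at ea₂ eb₂ ea₁ eb₁
  apply exists_metricBtw_metricBtw_of_orient_ne (hq a₁ b₁ a₂ (by grind [h₁.1]))
    (hq a₁ b₁ b₂ (by grind [h₁.1]))
  · simp [ea₂, eb₂, ha₂, hb₂]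
  · simp [ea₁, eb₁, ha₁, hb₁]

end Configuration

/-! ### The weights of the cuts -/

section CutWeight

variable {ι : Type*} [Fintype ι] {σ : ι → ι → ι → Bool} {d : ι → ι → ℝ} {c : ι → Bool}
  {a₁ b₁ a₂ b₂ : ι}

open Classical in
/-- The total length of the bitangents of the cut `c` that join its two classes. -/
noncomputable def crossingLength (σ : ι → ι → ι → Bool) (d : ι → ι → ℝ) (c : ι → Bool) : ℝ :=
  ∑ i, ∑ j, if IsBitangent σ c i j ∧ c i ≠ c j then d i j else 0

open Classical in
/-- The sign with which the pair `i j` contributes to the weight of the cut `c`: positive for the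
bitangents that join the two classes, negative for those with both ends in one class, and zero for
all other pairs. -/
noncomputable def bitangentSign (σ : ι → ι → ι → Bool) (c : ι → Bool) (i j : ι) : ℝ :=
  if IsBitangent σ c i j then if c i ≠ c j then 1 else -1 else 0

/-- The signed length of the bitangents of the cut `c`. In the Crofton formula this is the measure
of the set of lines that separate the two classes. -/
noncomputable def cutWeight (σ : ι → ι → ι → Bool) (d : ι → ι → ℝ) (c : ι → Bool) : ℝ :=
  ∑ i, ∑ j, bitangentSign σ c i j * d i j

theorem cutWeight_eq_sub (σ : ι → ι → ι → Bool) (d : ι → ι → ℝ) (c : ι → Bool) :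
    cutWeight σ d c = crossingLength σ d c - ∑ i, outLength (IsFacingEdge σ c true) d i -
      ∑ i, outLength (IsFacingEdge σ c false) d i := by
  simp only [cutWeight, crossingLength, outLength, Finset.sum_filter, ← Finset.sum_sub_distrib]
  refine Finset.sum_congr rfl fun i _ => Finset.sum_congr rfl fun j _ => ?_
  by_cases h : IsBitangent σ c i j <;> cases hi : c i <;> cases hj : c j <;>
    simp [bitangentSign, IsFacingEdge, h, hi, hj]

theorem crossingLength_nonneg (hd : ∀ i j, 0 ≤ d i j) : 0 ≤ crossingLength σ d c := by
  refine Finset.sum_nonneg fun i _ => Finset.sum_nonneg fun j _ => ?_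
  split_ifs
  exacts [hd i j, le_rfl]

theorem add_le_crossingLength (hd : ∀ i j, 0 ≤ d i j) (h₁ : IsBitangent σ c a₁ b₁)
    (h₂ : IsBitangent σ c b₂ a₂) (ha₁ : c a₁ = true) (hb₁ : c b₁ = false) (ha₂ : c a₂ = true)
    (hb₂ : c b₂ = false) : d a₁ b₁ + d b₂ a₂ ≤ crossingLength σ d c := by
  classical
  have hterm : ∀ p : ι × ι,
      0 ≤ if IsBitangent σ c p.1 p.2 ∧ c p.1 ≠ c p.2 then d p.1 p.2 else 0 := fun p => by
    split_ifs
    exacts [hd _ _, le_rfl]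
  have hne : (a₁, b₁) ≠ (b₂, a₂) := by
    rintro ⟨⟩
    simp [ha₁] at hb₂
  rw [crossingLength, ← Fintype.sum_prod_type']
  calc d a₁ b₁ + d b₂ a₂
      = ∑ p ∈ {(a₁, b₁), (b₂, a₂)},
          if IsBitangent σ c p.1 p.2 ∧ c p.1 ≠ c p.2 then d p.1 p.2 else 0 := by
        simp [Finset.sum_pair hne, h₁, h₂, ha₁, hb₁, ha₂, hb₂]
    _ ≤ _ := Finset.sum_le_univ_sum_of_nonneg hterm

variable {S : Type*} [MetricSpace S] [BusemannSurface S] {q : ι → S}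

theorem IsGeneric.cutWeight_nonneg_of_isBitangent (hq : IsGeneric q)
    (h₁ : IsBitangent (orientations q) c a₁ b₁) (h₂ : IsBitangent (orientations q) c b₂ a₂)
    (ha₁ : c a₁ = true) (hb₁ : c b₁ = false) (ha₂ : c a₂ = true) (hb₂ : c b₂ = false) :
    0 ≤ cutWeight (orientations q) (fun i j => dist (q i) (q j)) c := by
  obtain ⟨O, hO₁, hO₂⟩ := hq.exists_crossing h₁ h₂ ha₁ hb₁ ha₂ hb₂
  have htrue := hq.sum_outLength_le h₁ h₂ ha₁ hb₁ ha₂ hb₂ hO₁ hO₂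
  have hfalse := hq.sum_outLength_le h₂ h₁ hb₂ ha₂ hb₁ ha₁ hO₂.symm hO₁.symm
  have hcross := add_le_crossingLength (fun i j => dist_nonneg (x := q i) (y := q j))
    h₁ h₂ ha₁ hb₁ ha₂ hb₂
  have h₁' : dist (q a₁) O + dist O (q b₁) = dist (q a₁) (q b₁) := hO₁
  have h₂' : dist (q b₂) O + dist O (q a₂) = dist (q b₂) (q a₂) := hO₂.symm
  rw [cutWeight_eq_sub]
  linarith

theorem IsGeneric.cutWeight_nonneg (hq : IsGeneric q) (htrue : ∃ i, c i = true)
    (hfalse : ∃ i, c i = false) :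
    0 ≤ cutWeight (orientations q) (fun i j => dist (q i) (q j)) c := by
  obtain ⟨i, hi⟩ := htrue
  obtain ⟨j, hj⟩ := hfalse
  by_cases htrue : ∃ y f, IsFacingEdge (orientations q) c true y f
  · obtain ⟨y, f, h⟩ := htrue
    obtain ⟨a₁, b₁, a₂, b₂, h₁, h₂, ha₁, hb₁, ha₂, hb₂⟩ := h.exists_bitangents hq.isCCSystem hj
    exact hq.cutWeight_nonneg_of_isBitangent h₁ h₂ ha₁ hb₁ ha₂ hb₂
  by_cases hfalse : ∃ y f, IsFacingEdge (orientations q) c false y f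
  · obtain ⟨y, f, h⟩ := hfalse
    obtain ⟨a₁, b₁, a₂, b₂, h₁, h₂, ha₁, hb₁, ha₂, hb₂⟩ := h.exists_bitangents hq.isCCSystem hi
    exact hq.cutWeight_nonneg_of_isBitangent h₂ h₁ hb₂ ha₂ hb₁ ha₁
  push Not at htrue hfalse
  rw [cutWeight_eq_sub, Finset.sum_eq_zero fun i _ => outLength_eq_zero (htrue i),
    Finset.sum_eq_zero fun i _ => outLength_eq_zero (hfalse i), sub_zero, sub_zero]
  exact crossingLength_nonneg fun _ _ => dist_nonneg

end CutWeight

/-! ### The Crofton formula -/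

section Crofton

variable {ι : Type*} [DecidableEq ι] {σ : ι → ι → ι → Bool} {x y i j v : ι}

theorem isBitangent_update_iff (c : ι → Bool) (hv : v = i ∨ v = j) (b : Bool) :
    IsBitangent σ (Function.update c v b) i j ↔ IsBitangent σ c i j := by
  refine and_congr_right fun _ => forall₃_congr fun k hi hj => ?_
  rw [Function.update_of_ne (by rcases hv with rfl | rfl <;> assumption)]

theorem bitangentSign_update_not (c : ι → Bool) (hij : i ≠ j) (hv : v = i ∨ v = j) :
    bitangentSign σ (Function.update c v !c v) i j = -bitangentSign σ c i j := by
  have hupdate := isBitangent_update_iff (σ := σ) c hv !c v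
  rcases hv with rfl | rfl
  · cases hv : c v <;> cases hj : c j <;>
      simp_all [bitangentSign, Function.update_of_ne hij.symm, apply_ite]
  · cases hv : c v <;> cases hi : c i <;>
      simp_all [bitangentSign, apply_ite]

variable [Fintype ι]

/-- The linear combination of cut pseudometrics in which the cut `c` has coefficient `w c`. -/
def cutMetric (w : (ι → Bool) → ℝ) (x y : ι) : ℝ :=
  ∑ c with c x ≠ c y, w c

/-- Moving an end `v` of the pair `i j` to the other class reverses the sign. -/
theorem sum_bitangentSign_eq_zero (hij : i ≠ j) (hv : v = i ∨ v = j) (hx : x ≠ v) (hy : y ≠ v) :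
    ∑ c with c x ≠ c y, bitangentSign σ c i j = 0 := by
  refine Finset.sum_involution (fun c _ => Function.update c v !c v) (fun c _ => ?_)
    (fun c _ _ h => ?_) (fun c hc => ?_) (fun c _ => by simp)
  · rw [bitangentSign_update_not c hij hv, add_neg_cancel]
  · simpa using congrFun h v
  · simpa [hx, hy] using hc

theorem sum_bitangentSign_self (hxy : x ≠ y) :
    ∑ c with c x ≠ c y, bitangentSign σ c x y = 2 := by
  let cut : Bool → ι → Bool := fun b => Function.update (Function.update (σ x y) x b) y !b
  have hcut_left : ∀ b, cut b x = b := fun b => by simp [cut, hxy]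
  have hcut_right : ∀ b, cut b y = !b := fun b => by simp [cut]
  have hbitangent : ∀ c : ι → Bool, c x ≠ c y → (IsBitangent σ c x y ↔ c = cut (c x)) := by
    intro c hc
    refine ⟨fun h => funext fun k => ?_, fun h => ⟨hxy, fun k hx hy => ?_⟩⟩
    · by_cases hy : k = y
      · rw [hy, hcut_right]
        exact Bool.eq_not_of_ne hc.symm
      by_cases hx : k = x
      · rw [hx, hcut_left]
      · simp [cut, hx, hy, h.2 k hx hy]
    · rw [h]
      simp [cut, hx, hy]
  have hsum : ∑ _b : Bool, (1 : ℝ) = ∑ c with c x ≠ c y, bitangentSign σ c x y := by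
    refine Finset.sum_of_injOn cut (fun b _ b' _ h => ?_) (fun b _ => ?_) (fun c hc h => ?_)
      (fun b _ => ?_)
    · rw [← hcut_left b, h, hcut_left]
    · simp [hcut_left, hcut_right]
    · rw [bitangentSign, if_neg]
      rw [hbitangent c (Finset.mem_filter.1 hc).2]
      exact fun hcut => h ⟨c x, by simp, hcut.symm⟩
    · have hne : cut b x ≠ cut b y := by simp [hcut_left, hcut_right]
      rw [bitangentSign, if_pos ((hbitangent _ hne).2 (by rw [hcut_left])), if_pos hne]
  rw [← hsum]
  simp

theorem sum_bitangentSign (σ : ι → ι → ι → Bool) (hxy : x ≠ y) (i j : ι) :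
    ∑ c with c x ≠ c y, bitangentSign σ c i j = if s(i, j) = s(x, y) then 2 else 0 := by
  split_ifs with h
  · obtain ⟨rfl, rfl⟩ | ⟨rfl, rfl⟩ := Sym2.eq_iff.1 h
    · exact sum_bitangentSign_self hxy
    · simpa only [ne_comm] using sum_bitangentSign_self (σ := σ) hxy.symm
  by_cases hij : i = j
  · simp [bitangentSign, IsBitangent, hij]
  obtain ⟨v, hv, hxv, hyv⟩ : ∃ v, (v = i ∨ v = j) ∧ x ≠ v ∧ y ≠ v := by
    rw [Sym2.eq_iff] at h
    by_cases hi : i = x ∨ i = y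
    · exact ⟨j, .inr rfl, by grind, by grind⟩
    · exact ⟨i, .inl rfl, by grind, by grind⟩
  exact sum_bitangentSign_eq_zero hij hv hxv hyv

theorem cutMetric_cutWeight (σ : ι → ι → ι → Bool) (d : ι → ι → ℝ) (hxy : x ≠ y) :
    cutMetric (cutWeight σ d) x y = 2 * (d x y + d y x) := by
  have hne : (x, y) ≠ (y, x) := fun h => hxy (congrArg Prod.fst h)
  have hpairs : (Finset.univ.filter fun p : ι × ι => s(p.1, p.2) = s(x, y)) =
      {(x, y), (y, x)} := by
    ext ⟨i, j⟩
    simp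
  calc cutMetric (cutWeight σ d) x y
      = ∑ i, ∑ j, (∑ c with c x ≠ c y, bitangentSign σ c i j) * d i j := by
        simp only [cutMetric, cutWeight, Finset.sum_mul]
        rw [Finset.sum_comm]
        exact Finset.sum_congr rfl fun i _ => Finset.sum_comm
    _ = ∑ p : ι × ι, if s(p.1, p.2) = s(x, y) then 2 * d p.1 p.2 else 0 := by
        simp only [sum_bitangentSign σ hxy, ite_mul, zero_mul, Fintype.sum_prod_type]
    _ = 2 * (d x y + d y x) := by
        rw [← Finset.sum_filter, hpairs, Finset.sum_pair hne, mul_add]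

end Crofton

/-! ### The cut cone -/

section CutCone

open Filter Topology

variable (ι : Type*) [Fintype ι] [DecidableEq ι]

/-- The cone of the pseudometrics on `ι` that are nonnegative combinations of cut pseudometrics. -/
def cutCone : Set (ι → ι → ℝ) :=
  cutMetric '' Ici 0

variable {ι}

/-- The constant cuts have no influence on `cutMetric w`, and the weight of any other cut is bounded
by the distance of two points that it separates. -/
theorem exists_mem_Icc_of_mem_cutCone {D : ι → ι → ℝ} {M : ℝ} (hD : D ∈ cutCone ι) (hM₀ : 0 ≤ M)
    (hM : ∀ x y, D x y ≤ M) : D ∈ cutMetric '' Icc 0 (fun _ => M) := by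
  obtain ⟨w, hw, rfl⟩ := hD
  refine ⟨fun c => min (w c) M, ⟨fun c => le_min (hw c) hM₀, fun c => min_le_right _ _⟩, ?_⟩
  ext x y
  refine Finset.sum_congr rfl fun c hc => min_eq_left (le_trans ?_ (hM x y))
  exact Finset.single_le_sum (fun c _ => hw c) hc

theorem isClosed_cutCone : IsClosed (cutCone ι) := by
  have hcont : Continuous (cutMetric : ((ι → Bool) → ℝ) → ι → ι → ℝ) := by
    unfold cutMetric
    fun_prop
  refine IsSeqClosed.isClosed fun D D' hD hlim => ?_
  obtain ⟨M, hM⟩ := (Metric.isBounded_range_of_tendsto D hlim).exists_norm_le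
  replace hM : ∀ n, ‖D n‖ ≤ M := fun n => hM _ (mem_range_self n)
  have hmem : ∀ n, D n ∈ cutMetric '' Icc 0 (fun _ => M) := fun n =>
    exists_mem_Icc_of_mem_cutCone (hD n) ((norm_nonneg _).trans (hM n)) fun x y =>
      (Real.le_norm_self _).trans <| (norm_le_pi_norm (D n x) y).trans <|
        (norm_le_pi_norm (D n) x).trans (hM n)
  have hclosed : IsClosed (cutMetric '' Icc (0 : (ι → Bool) → ℝ) (fun _ => M)) :=
    (isCompact_Icc.image hcont).isClosed
  exact image_mono Icc_subset_Ici_self (hclosed.mem_of_tendsto hlim (.of_forall hmem))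

theorem exists_l1_embedding_of_mem_cutCone {D : ι → ι → ℝ} (hD : D ∈ cutCone ι) :
    ∃ (N : ℕ) (φ : ι → Fin N → ℝ), ∀ x y, ∑ i, |φ x i - φ y i| = D x y := by
  obtain ⟨w, hw, rfl⟩ := hD
  let e := Fintype.equivFin (ι → Bool)
  refine ⟨_, fun x i => if e.symm i x then w (e.symm i) else 0, fun x y => ?_⟩
  rw [e.symm.sum_comp fun c => |(if c x then w c else 0) - if c y then w c else 0|, cutMetric,
    Finset.sum_filter]
  refine Finset.sum_congr rfl fun c _ => ?_
  cases hx : c x <;> cases hy : c y <;> simp [abs_of_nonneg (hw c)]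

variable {S : Type*} [MetricSpace S] [BusemannSurface S] {q : ι → S}

theorem IsGeneric.dist_mem_cutCone (hq : IsGeneric q) :
    (fun x y => dist (q x) (q y)) ∈ cutCone ι := by
  let w := cutWeight (orientations q) fun i j => dist (q i) (q j)
  refine ⟨fun c => max (w c / 4) 0, fun c => le_max_right _ _, ?_⟩
  ext x y
  by_cases hxy : x = y
  · simp [cutMetric, hxy]
  have hcrofton : cutMetric w x y = 2 * (dist (q x) (q y) + dist (q y) (q x)) :=
    cutMetric_cutWeight _ _ hxy
  have hw : ∀ c : ι → Bool, c x ≠ c y → 0 ≤ w c := fun c hc => by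
    apply hq.cutWeight_nonneg <;> grind
  calc cutMetric (fun c => max (w c / 4) 0) x y
      = ∑ c with c x ≠ c y, w c / 4 :=
        Finset.sum_congr rfl fun c hc =>
          max_eq_left (div_nonneg (hw c (Finset.mem_filter.1 hc).2) (by norm_num))
    _ = cutMetric w x y / 4 := (Finset.sum_div _ _ _).symm
    _ = dist (q x) (q y) := by
        rw [hcrofton, dist_comm (q y)]
        ring

end CutCone

/-! ### Generic configurations are dense -/

section Dense

theorem exists_mem_sphere_add_eq_sub {E : Type*} [NormedAddCommGroup E] [NormedSpace ℝ E]
    (hE : 1 < Module.rank ℝ E) {f : E → ℝ} (hf : Continuous f) (z : E) {r : ℝ} (hr : 0 ≤ r) :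
    ∃ u ∈ sphere (0 : E) r, f (z + u) = f (z - u) := by
  have : Nontrivial E := rank_pos_iff_nontrivial.1 (zero_lt_one.trans hE)
  obtain ⟨u, hu⟩ := (NormedSpace.sphere_nonempty (x := (0 : E))).2 hr
  have hu' : -u ∈ sphere (0 : E) r := by simpa using hu
  have hadd : ContinuousOn (fun u => f (z + u)) (sphere 0 r) := by fun_prop
  have hsub : ContinuousOn (fun u => f (z - u)) (sphere 0 r) := by fun_prop
  have hconn := isPreconnected_sphere hE (0 : E) r
  rcases le_total (f (z + u)) (f (z - u)) with h | h
  · exact hconn.intermediate_value₂ hu hu' hadd hsub h (by simpa [← sub_eq_add_neg] using h)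
  · exact hconn.intermediate_value₂ hu' hu hadd hsub (by simpa [← sub_eq_add_neg] using h) h

theorem dense_iInter_of_isOpen_of_finite {X α : Type*} [TopologicalSpace X] [Finite α]
    {V : α → Set X} (hopen : ∀ a, IsOpen (V a)) (hdense : ∀ a, Dense (V a)) :
    Dense (⋂ a, V a) := by
  suffices h : ∀ s : Set α, s.Finite → Dense (⋂ a ∈ s, V a) by
    simpa using h univ finite_univ
  intro s hs
  induction s, hs using Set.Finite.induction_on with
  | empty => simp
  | insert _ _ ih =>
    rw [biInter_insert]
    exact (hdense _).inter_of_isOpen_left ih (hopen _)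

theorem MetricBtw.eq_of_dist_eq {S : Type*} [MetricSpace S] [BusemannSpace S] {x y m m' : S}
    (h : MetricBtw x m y) (h' : MetricBtw x m' y) (hdist : dist x m = dist x m') : m = m' := by
  rcases h.total h' with hm | hm <;> rw [MetricBtw] at hm
  · exact dist_le_zero.1 (by linarith)
  · exact (dist_le_zero.1 (by linarith)).symm

variable {S : Type*} [MetricSpace S] [BusemannSurface S]

/-- The distance from `x` is injective on the segment from `x` to `y`, but it takes the same value
at two opposite points of any small circle of the chart. -/
theorem dense_setOf_not_metricBtw (x y : S) : Dense {m | ¬ MetricBtw x m y} := by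
  suffices hinterior : interior {m | MetricBtw x m y} = ∅ from
    interior_eq_empty_iff_dense_compl.1 hinterior
  refine eq_empty_iff_forall_notMem.2 fun m hm => ?_
  let e := planeChart S
  obtain ⟨δ, hδ, hball⟩ := Metric.isOpen_iff.1
    (isOpen_interior.preimage e.symm.continuous) (e m) (by simpa using hm)
  obtain ⟨u, hu, heq⟩ := exists_mem_sphere_add_eq_sub (by simp : 1 < Module.rank ℝ ℂ)
    (f := fun z => dist x (e.symm z)) (by fun_prop) (e m) (half_pos hδ).le
  have hnorm : ‖u‖ = δ / 2 := by simpa using hu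
  have hbtw : ∀ z ∈ ball (e m) δ, MetricBtw x (e.symm z) y := fun z hz =>
    interior_subset (s := {m | MetricBtw x m y}) (hball hz)
  have hadd := hbtw (e m + u) (by simp [hnorm, hδ])
  have hsub := hbtw (e m - u) (by simp [hnorm, hδ])
  have hu_eq : e m + u = e m - u := e.symm.injective (hadd.eq_of_dist_eq hsub heq)
  have hu₀ : u = 0 := by linear_combination hu_eq / 2
  rw [hu₀, norm_zero] at hnorm
  linarith

variable {ι : Type*}

theorem dense_setOf_not_metricBtw_apply [Finite ι] {i j k : ι} (hij : i ≠ j) (hjk : j ≠ k) :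
    Dense {q : ι → S | ¬ MetricBtw (q i) (q j) (q k)} := by
  classical
  cases nonempty_fintype ι
  intro q
  rw [Metric.mem_closure_iff]
  intro ε hε
  obtain ⟨m, hm, hdist⟩ := (dense_setOf_not_metricBtw (q i) (q k)).exists_dist_lt (q j) hε
  refine ⟨Function.update q j m, by simpa [hij, hjk.symm] using hm, ?_⟩
  rw [dist_pi_lt_iff hε]
  intro l
  by_cases hl : l = j
  · subst hl
    simpa using hdist
  · simpa [hl] using hε

theorem dense_setOf_isGeneric [Finite ι] : Dense {q : ι → S | IsGeneric q} := by
  let V : {t : ι × ι × ι // [t.1, t.2.1, t.2.2].Nodup} → Set (ι → S) := fun t =>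
    {q | ¬ MetricBtw (q t.1.1) (q t.1.2.1) (q t.1.2.2)}
  have hopen : ∀ t, IsOpen (V t) := fun t =>
    (isClosed_eq (by fun_prop) (by fun_prop)).isOpen_compl
  have hdense : ∀ t, Dense (V t) := fun t =>
    dense_setOf_not_metricBtw_apply (by grind) (by grind)
  refine (dense_iInter_of_isOpen_of_finite hopen hdense).mono fun q hq i j k h => ?_
  have hV : ∀ i j k, [i, j, k].Nodup → ¬ MetricBtw (q i) (q j) (q k) := fun i j k h =>
    mem_iInter.1 hq ⟨(i, j, k), h⟩
  exact ⟨hV i j k h, hV j k i (by grind), hV k i j (by grind)⟩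

theorem dist_mem_cutCone [Fintype ι] [DecidableEq ι] (q : ι → S) :
    (fun x y => dist (q x) (q y)) ∈ cutCone ι := by
  have hclosed : IsClosed {q : ι → S | (fun x y => dist (q x) (q y)) ∈ cutCone ι} :=
    isClosed_cutCone.preimage (by fun_prop)
  exact hclosed.closure_subset_iff.2 (fun q hq => hq.dist_mem_cutCone) (dense_setOf_isGeneric q)

end Dense

theorem busemann_surface_general_position_l1_embeddable_general {S : Type*} [MetricSpace S]
    (hS : IsBusemannSurface S) (Q : Set S) (hQfin : Q.Finite) :
    ∃ (N : ℕ) (φ : S → Fin N → ℝ),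
      ∀ x ∈ Q, ∀ y ∈ Q, (∑ i : Fin N, |φ x i - φ y i|) = dist x y := by
  classical
  have : BusemannSurface S := { isBusemannSpace := hS.1, homeo := hS.2 }
  have : Fintype Q := hQfin.fintype
  obtain ⟨N, φ, hφ⟩ := exists_l1_embedding_of_mem_cutCone (dist_mem_cutCone fun x : Q => (x : S))
  have hextend : ∀ x : Q, Function.extend Subtype.val φ 0 (x : S) = φ x :=
    Subtype.val_injective.extend_apply φ 0
  refine ⟨N, Function.extend Subtype.val φ 0, fun x hx y hy => ?_⟩
  rw [hextend ⟨x, hx⟩, hextend ⟨y, hy⟩, hφ]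

/-- consequence of the Crofton formula: any finite set of points in general
position of a Busemann surface is `l₁`-embeddable. -/
theorem busemann_surface_general_position_l1_embeddable {S : Type*} [MetricSpace S]
    (hS : IsBusemannSurface S)
    (Q : Set S) (hQfin : Q.Finite) (hgen : InGeneralPosition Q) :
    ∃ (N : ℕ) (φ : S → Fin N → ℝ),
      ∀ x ∈ Q, ∀ y ∈ Q, (∑ i : Fin N, |φ x i - φ y i|) = dist x y :=
  busemann_surface_general_position_l1_embeddable_general hS Q hQfin
end
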